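/- arXiv:2502.12500 — 11 statements merged into one kernel-verified Lean document; each statement's English description precedes it below -/
import Mathlib

section
/- Let n ≥ 1 and let K be a ℚ-subalgebra of Mat(n,ℚ) that is commutative and reduced (as a ring), and suppose the natural action of K on ℚⁿ is irreducible, i.e. the only ℚ-linear subspaces V ⊆ ℚⁿ with A·V ⊆ V for all A ∈ K are V = {0} and V = ℚⁿ. Then the dimension of K as a ℚ-vector space equals n. -/
/-- A commutative reduced `ℚ`-subalgebra `K` of `Mat(n,ℚ)` whose natural action on `ℚⁿ`
is irreducible has `ℚ`-dimension `n`. -/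
theorem subalgebra_finrank_eq_of_irreducible
    (n : ℕ) (hn : 1 ≤ n) (K : Subalgebra ℚ (Matrix (Fin n) (Fin n) ℚ))
    (hcomm : ∀ A ∈ K, ∀ B ∈ K, A * B = B * A)
    (hred : IsReduced ↥K)
    (hirr : ∀ V : Submodule ℚ (Fin n → ℚ),
      (∀ A ∈ K, ∀ v ∈ V, A.mulVec v ∈ V) → V = ⊥ ∨ V = ⊤) :
    Module.finrank ℚ ↥K = n := by
  have hv : ∃ v : Fin n → ℚ, v ≠ 0 :=
    ⟨fun _ => 1, fun h => one_ne_zero (congrFun h ⟨0, hn⟩)⟩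
  obtain ⟨v, hv⟩ := hv
  let φ : ↥K →ₗ[ℚ] (Fin n → ℚ) :=
    { toFun := fun A => (A : Matrix (Fin n) (Fin n) ℚ).mulVec v
      map_add' := fun A B => by simp [Matrix.add_mulVec]
      map_smul' := fun c A => by simp [Matrix.smul_mulVec] }
  have hφ : ∀ A : ↥K, φ A = (A : Matrix (Fin n) (Fin n) ℚ).mulVec v := fun _ => rfl
  have hsurj : LinearMap.range φ = ⊤ := by
    rcases hirr (LinearMap.range φ) (by
      rintro A hA _ ⟨B, rfl⟩
      exact ⟨⟨A, hA⟩ * B, by simp [hφ, Matrix.mulVec_mulVec]⟩) with h | h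
    · exfalso
      have h1 : v ∈ LinearMap.range φ := ⟨1, by simp [hφ]⟩
      rw [h] at h1
      exact hv (by simpa using h1)
    · exact h
  have hinj : Function.Injective φ := by
    rw [injective_iff_map_eq_zero]
    intro A hA
    rw [hφ] at hA
    apply Subtype.ext
    apply Matrix.mulVec_injective
    funext w
    obtain ⟨B, rfl⟩ : w ∈ LinearMap.range φ := by rw [hsurj]; trivial
    rw [hφ, Matrix.mulVec_mulVec, hcomm A A.2 B B.2, ← Matrix.mulVec_mulVec, hA]
    simp
  have e := LinearEquiv.ofBijective φ ⟨hinj, LinearMap.range_eq_top.mp hsurj⟩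
  rw [e.finrank_eq]
  simp
end

section
/- Let g be a finite-dimensional real unimodular Lie algebra with a meta-abelian decomposition g = m ⊕ n and an LCK structure (J, ⟨·,·⟩, θ). If the restriction of θ to n is not identically zero, then J is abelian, i.e. [Jx, Jy] = [x, y] for all x, y ∈ g. -/
/-- If a finite-dimensional real unimodular Lie algebra `g` with a meta-abelian
decomposition `g = m ⊕ n` carries an LCK structure `(J, B, θ)` whose Lee form `θ` does
not vanish identically on `n`, then `J` is abelian: `⁅Jx, Jy⁆ = ⁅x, y⁆`. -/
theorem lck_abelian_complex_structure
    (g : Type*) [LieRing g] [LieAlgebra ℝ g] [FiniteDimensional ℝ g]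
    (B : g →ₗ[ℝ] g →ₗ[ℝ] ℝ) (J : g →ₗ[ℝ] g) (θ : g →ₗ[ℝ] ℝ)
    (hBsymm : ∀ x y : g, B x y = B y x)
    (hBpos : ∀ x : g, x ≠ 0 → 0 < B x x)
    (hJ2 : ∀ x : g, J (J x) = -x)
    (hJB : ∀ x y : g, B (J x) (J y) = B x y)
    (hJint : ∀ x y : g, ⁅x, y⁆ - ⁅J x, J y⁆ + J ⁅x, J y⁆ + J ⁅J x, y⁆ = 0)
    (hθbr : ∀ x y : g, θ ⁅x, y⁆ = 0)
    (hLCK : ∀ x y z : g,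
      -(B (J ⁅x, y⁆) z) - B (J ⁅y, z⁆) x - B (J ⁅z, x⁆) y =
        θ x * B (J y) z + θ y * B (J z) x + θ z * B (J x) y)
    (m n : Submodule ℝ g)
    (hcompl : IsCompl m n)
    (hnab : ∀ x ∈ n, ∀ y ∈ n, ⁅x, y⁆ = (0 : g))
    (hnideal : ∀ x : g, ∀ y ∈ n, ⁅x, y⁆ ∈ n)
    (hmab : ∀ x ∈ m, ∀ y ∈ m, ⁅x, y⁆ = (0 : g))
    (hunimod : ∀ x : g, LinearMap.trace ℝ g (LieAlgebra.ad ℝ g x) = 0)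
    (hθn : ∃ x ∈ n, θ x ≠ 0) :
    ∀ x y : g, ⁅J x, J y⁆ = ⁅x, y⁆ := by
  obtain ⟨u, hu, hθu⟩ := hθn
  have hiso : ∀ y ∈ n, ∀ z ∈ n, θ y = 0 → θ z = 0 → B (J y) z = 0 := by
    intro y hy z hz h1 h2
    have h := hLCK u y z
    rw [hnab u hu y hy, hnab y hy z hz, hnab z hz u hu, h1, h2] at h
    simp at h
    exact h.resolve_left hθu
  have hder : ∀ x y : g, ⁅x, y⁆ ∈ n := by
    intro x y
    have hx : x ∈ m ⊔ n := by rw [hcompl.sup_eq_top]; trivial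
    have hy : y ∈ m ⊔ n := by rw [hcompl.sup_eq_top]; trivial
    obtain ⟨a, ha, b, hb, rfl⟩ := Submodule.mem_sup.1 hx
    obtain ⟨c, hc, d, hd, rfl⟩ := Submodule.mem_sup.1 hy
    have h1 : ⁅b, c⁆ ∈ n := by
      rw [← lie_skew]
      exact n.neg_mem (hnideal c b hb)
    rw [lie_add, add_lie, add_lie, hmab a ha c hc, zero_add]
    exact n.add_mem h1 (n.add_mem (hnideal a d hd) (hnideal b d hd))
  intro x y
  have hw : ⁅x, y⁆ - ⁅J x, J y⁆ ∈ n := n.sub_mem (hder _ _) (hder _ _)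
  have hv : ⁅x, J y⁆ + ⁅J x, y⁆ ∈ n := n.add_mem (hder _ _) (hder _ _)
  have h0 := hiso _ hv _ hw (by simp [hθbr]) (by simp [hθbr])
  have hJv : J (⁅x, J y⁆ + ⁅J x, y⁆) = -(⁅x, y⁆ - ⁅J x, J y⁆) := by
    rw [map_add, eq_neg_iff_add_eq_zero, ← hJint x y]
    abel
  rw [hJv, map_neg, LinearMap.neg_apply, neg_eq_zero] at h0
  by_contra hne
  have hpos := hBpos (⁅x, y⁆ - ⁅J x, J y⁆) (fun h => hne (sub_eq_zero.1 h).symm)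
  exact absurd h0 hpos.ne'
end

section
/- Let g be a finite-dimensional real unimodular Lie algebra with a meta-abelian decomposition g = m ⊕ n and an LCK structure (J, ⟨·,·⟩, θ) such that θ ≠ 0, θ vanishes on n, and n + J(n) = g. Set a = n ∩ J(n). Then for all u ∈ m and all x ∈ a one has [u, Jx] = J[u, x]. -/
/-- For a non-Vaisman LCK structure on a unimodular meta-abelian Lie algebra
`g = m ⊕ n` with `n + J(n) = g`, every `u ∈ m` acts complex-linearly on the maximal
`J`-invariant subspace `a = n ∩ J(n)`: `⁅u, Jx⁆ = J⁅u, x⁆`. -/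
theorem lck_bracket_commutes_with_J_on_a
    (g : Type*) [LieRing g] [LieAlgebra ℝ g] [FiniteDimensional ℝ g]
    (B : g →ₗ[ℝ] g →ₗ[ℝ] ℝ) (J : g →ₗ[ℝ] g) (θ : g →ₗ[ℝ] ℝ)
    (hBsymm : ∀ x y : g, B x y = B y x)
    (hBpos : ∀ x : g, x ≠ 0 → 0 < B x x)
    (hJ2 : ∀ x : g, J (J x) = -x)
    (hJB : ∀ x y : g, B (J x) (J y) = B x y)
    (hJint : ∀ x y : g, ⁅x, y⁆ - ⁅J x, J y⁆ + J ⁅x, J y⁆ + J ⁅J x, y⁆ = 0)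
    (hθbr : ∀ x y : g, θ ⁅x, y⁆ = 0)
    (hLCK : ∀ x y z : g,
      -(B (J ⁅x, y⁆) z) - B (J ⁅y, z⁆) x - B (J ⁅z, x⁆) y =
        θ x * B (J y) z + θ y * B (J z) x + θ z * B (J x) y)
    (m n : Submodule ℝ g)
    (hcompl : IsCompl m n)
    (hnab : ∀ x ∈ n, ∀ y ∈ n, ⁅x, y⁆ = (0 : g))
    (hnideal : ∀ x : g, ∀ y ∈ n, ⁅x, y⁆ ∈ n)
    (hmab : ∀ x ∈ m, ∀ y ∈ m, ⁅x, y⁆ = (0 : g))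
    (hunimod : ∀ x : g, LinearMap.trace ℝ g (LieAlgebra.ad ℝ g x) = 0)
    (hθ0 : θ ≠ 0)
    (hθn : ∀ x ∈ n, θ x = 0)
    (hspan : n ⊔ Submodule.map J n = ⊤) :
    ∀ u ∈ m, ∀ x ∈ n ⊓ Submodule.map J n, ⁅u, J x⁆ = J ⁅u, x⁆ := by
  rintro u - x ⟨hx, w, hw, hwx⟩
  have hJx : J x ∈ n := by
    rw [← hwx, hJ2]
    exact n.neg_mem hw
  have hu : u ∈ n ⊔ Submodule.map J n := by
    rw [hspan]
    exact Submodule.mem_top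
  obtain ⟨y, hy, z, ⟨v, hv, rfl⟩, rfl⟩ := Submodule.mem_sup.mp hu
  have h := hJint v x
  rw [hnab v hv x hx, hnab v hv _ hJx, map_zero, zero_sub, add_zero, neg_add_eq_zero] at h
  rw [add_lie, add_lie, hnab y hy x hx, hnab y hy _ hJx, zero_add, zero_add]
  exact h
end

section
/- Let g be a finite-dimensional real unimodular Lie algebra with a meta-abelian decomposition g = m ⊕ n and an LCK structure (J, ⟨·,·⟩, θ) such that θ ≠ 0, θ vanishes on n, and n + J(n) = g. Then the subspace a = n ∩ J(n) is an ideal of g, i.e. [g, a] ⊆ a. -/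
/-- For a non-Vaisman LCK structure on a unimodular meta-abelian Lie algebra
`g = m ⊕ n` with `n + J(n) = g`, the maximal `J`-invariant subspace `a = n ∩ J(n)`
is an ideal of `g`. -/
theorem lck_a_is_ideal
    (g : Type*) [LieRing g] [LieAlgebra ℝ g] [FiniteDimensional ℝ g]
    (B : g →ₗ[ℝ] g →ₗ[ℝ] ℝ) (J : g →ₗ[ℝ] g) (θ : g →ₗ[ℝ] ℝ)
    (hBsymm : ∀ x y : g, B x y = B y x)
    (hBpos : ∀ x : g, x ≠ 0 → 0 < B x x)
    (hJ2 : ∀ x : g, J (J x) = -x)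
    (hJB : ∀ x y : g, B (J x) (J y) = B x y)
    (hJint : ∀ x y : g, ⁅x, y⁆ - ⁅J x, J y⁆ + J ⁅x, J y⁆ + J ⁅J x, y⁆ = 0)
    (hθbr : ∀ x y : g, θ ⁅x, y⁆ = 0)
    (hLCK : ∀ x y z : g,
      -(B (J ⁅x, y⁆) z) - B (J ⁅y, z⁆) x - B (J ⁅z, x⁆) y =
        θ x * B (J y) z + θ y * B (J z) x + θ z * B (J x) y)
    (m n : Submodule ℝ g)
    (hcompl : IsCompl m n)
    (hnab : ∀ x ∈ n, ∀ y ∈ n, ⁅x, y⁆ = (0 : g))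
    (hnideal : ∀ x : g, ∀ y ∈ n, ⁅x, y⁆ ∈ n)
    (hmab : ∀ x ∈ m, ∀ y ∈ m, ⁅x, y⁆ = (0 : g))
    (hunimod : ∀ x : g, LinearMap.trace ℝ g (LieAlgebra.ad ℝ g x) = 0)
    (hθ0 : θ ≠ 0)
    (hθn : ∀ x ∈ n, θ x = 0)
    (hspan : n ⊔ Submodule.map J n = ⊤) :
    ∀ x : g, ∀ y ∈ n ⊓ Submodule.map J n, ⁅x, y⁆ ∈ n ⊓ Submodule.map J n := by
  intro u z hz
  obtain ⟨hzn, w, hw, hwz⟩ := hz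
  have hwn : w ∈ n := hw
  have hJz : J z ∈ n := by
    rw [← hwz, hJ2]
    exact n.neg_mem hwn
  have hu : u ∈ n ⊔ Submodule.map J n := by
    rw [hspan]
    exact Submodule.mem_top
  obtain ⟨s, hs, t', ht', rfl⟩ := Submodule.mem_sup.mp hu
  obtain ⟨t, ht, rfl⟩ := Submodule.mem_map.mp ht'
  have hsz : ⁅s, z⁆ = (0 : g) := hnab s hs z hzn
  have h := hJint t z
  rw [hnab t ht z hzn, hnab t ht (J z) hJz, map_zero, zero_sub, add_zero] at h
  have h2 : J ⁅J t, z⁆ = ⁅J t, J z⁆ := (neg_add_eq_zero.mp h).symm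
  rw [add_lie, hsz, zero_add]
  refine ⟨hnideal _ _ hzn, ?_⟩
  refine Submodule.mem_map.mpr ⟨-⁅J t, J z⁆, n.neg_mem (hnideal _ _ hJz), ?_⟩
  rw [← h2, map_neg, hJ2, neg_neg]
end

section
/- Let g be a finite-dimensional real unimodular Lie algebra with a meta-abelian decomposition g = m ⊕ n and an LCK structure (J, ⟨·,·⟩, θ) such that θ ≠ 0, θ vanishes on n, and n + J(n) = g. Set a = n ∩ J(n) and let k be the orthogonal complement of a in n with respect to ⟨·,·⟩. Then k is an ideal of g, i.e. [g, k] ⊆ k. -/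
/-- For a non-Vaisman LCK structure on a unimodular meta-abelian Lie algebra
`g = m ⊕ n` with `n + J(n) = g`, the orthogonal complement `k` of `a = n ∩ J(n)`
inside `n` is an ideal of `g`. -/
theorem lck_k_is_ideal
    (g : Type*) [LieRing g] [LieAlgebra ℝ g] [FiniteDimensional ℝ g]
    (B : g →ₗ[ℝ] g →ₗ[ℝ] ℝ) (J : g →ₗ[ℝ] g) (θ : g →ₗ[ℝ] ℝ)
    (hBsymm : ∀ x y : g, B x y = B y x)
    (hBpos : ∀ x : g, x ≠ 0 → 0 < B x x)
    (hJ2 : ∀ x : g, J (J x) = -x)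
    (hJB : ∀ x y : g, B (J x) (J y) = B x y)
    (hJint : ∀ x y : g, ⁅x, y⁆ - ⁅J x, J y⁆ + J ⁅x, J y⁆ + J ⁅J x, y⁆ = 0)
    (hθbr : ∀ x y : g, θ ⁅x, y⁆ = 0)
    (hLCK : ∀ x y z : g,
      -(B (J ⁅x, y⁆) z) - B (J ⁅y, z⁆) x - B (J ⁅z, x⁆) y =
        θ x * B (J y) z + θ y * B (J z) x + θ z * B (J x) y)
    (m n : Submodule ℝ g)
    (hcompl : IsCompl m n)
    (hnab : ∀ x ∈ n, ∀ y ∈ n, ⁅x, y⁆ = (0 : g))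
    (hnideal : ∀ x : g, ∀ y ∈ n, ⁅x, y⁆ ∈ n)
    (hmab : ∀ x ∈ m, ∀ y ∈ m, ⁅x, y⁆ = (0 : g))
    (hunimod : ∀ x : g, LinearMap.trace ℝ g (LieAlgebra.ad ℝ g x) = 0)
    (hθ0 : θ ≠ 0)
    (hθn : ∀ x ∈ n, θ x = 0)
    (hspan : n ⊔ Submodule.map J n = ⊤)
    (k : Submodule ℝ g)
    (hk : ∀ v : g, v ∈ k ↔ v ∈ n ∧ ∀ y ∈ n ⊓ Submodule.map J n, B v y = 0) :
    ∀ x : g, ∀ v ∈ k, ⁅x, v⁆ ∈ k := by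
  intro x v hv
  obtain ⟨hvn, hva⟩ := (hk v).1 hv
  have hx : x ∈ n ⊔ Submodule.map J n := by rw [hspan]; trivial
  obtain ⟨p, hp, q, ⟨w, hw, rfl⟩, rfl⟩ := Submodule.mem_sup.1 hx
  rw [add_lie, hnab p hp v hvn, zero_add]
  refine (hk _).2 ⟨hnideal _ _ hvn, ?_⟩
  rintro y ⟨hyn, ⟨y', hy', rfl⟩⟩
  have hw : w ∈ n := hw
  have hy' : y' ∈ n := hy'
  have hyn : J y' ∈ n := hyn
  -- integrability: `ad (J w)` commutes with `J` on `a`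
  have h1 := hJint y' w
  rw [hnab y' hy' w hw, hnab (J y') hyn w hw, map_zero, add_zero, zero_sub] at h1
  have h2 : J ⁅J w, y'⁆ = ⁅J w, J y'⁆ := by
    rw [← lie_skew (J w) y', ← lie_skew (J w) (J y'), map_neg]
    have := eq_neg_of_add_eq_zero_right h1
    rw [this, neg_neg]
  have h3 : B (J ⁅J w, y'⁆) v = 0 := by
    rw [hBsymm]
    apply hva
    refine ⟨?_, ⟨_, hnideal _ _ hy', rfl⟩⟩
    rw [h2]
    exact hnideal _ _ hyn
  have h4 : B (J y') v = 0 := by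
    rw [hBsymm]
    exact hva _ ⟨hyn, ⟨_, hy', rfl⟩⟩
  have h5 := hLCK y' v (J w)
  rw [hnab y' hy' v hvn, h3, h4, hθn _ hy', hθn _ hvn] at h5
  simp only [map_zero, LinearMap.zero_apply] at h5
  have h6 := hJB (J ⁅v, J w⁆) y'
  rw [hJ2, ← lie_skew v (J w), neg_neg] at h6
  rw [h6, lie_skew]
  linarith
end

section
/- Let g be a finite-dimensional real unimodular Lie algebra with a meta-abelian decomposition g = m ⊕ n and an LCK structure (J, ⟨·,·⟩, θ) such that θ ≠ 0, θ vanishes on n, and n + J(n) = g. Set a = n ∩ J(n) and let k be the orthogonal complement of a in n with respect to ⟨·,·⟩. Then J(k) is an abelian Lie subalgebra of g; in particular [Jv₁, Jv₂] = 0 for all v₁, v₂ ∈ k. -/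
/-- For a non-Vaisman LCK structure on a unimodular meta-abelian Lie algebra
`g = m ⊕ n` with `n + J(n) = g`, the image `J(k)` of the orthogonal complement `k`
of `a = n ∩ J(n)` in `n` is an abelian Lie subalgebra: `⁅Jv₁, Jv₂⁆ = 0`. -/
theorem lck_Jk_abelian
    (g : Type*) [LieRing g] [LieAlgebra ℝ g] [FiniteDimensional ℝ g]
    (B : g →ₗ[ℝ] g →ₗ[ℝ] ℝ) (J : g →ₗ[ℝ] g) (θ : g →ₗ[ℝ] ℝ)
    (hBsymm : ∀ x y : g, B x y = B y x)
    (hBpos : ∀ x : g, x ≠ 0 → 0 < B x x)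
    (hJ2 : ∀ x : g, J (J x) = -x)
    (hJB : ∀ x y : g, B (J x) (J y) = B x y)
    (hJint : ∀ x y : g, ⁅x, y⁆ - ⁅J x, J y⁆ + J ⁅x, J y⁆ + J ⁅J x, y⁆ = 0)
    (hθbr : ∀ x y : g, θ ⁅x, y⁆ = 0)
    (hLCK : ∀ x y z : g,
      -(B (J ⁅x, y⁆) z) - B (J ⁅y, z⁆) x - B (J ⁅z, x⁆) y =
        θ x * B (J y) z + θ y * B (J z) x + θ z * B (J x) y)
    (m n : Submodule ℝ g)
    (hcompl : IsCompl m n)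
    (hnab : ∀ x ∈ n, ∀ y ∈ n, ⁅x, y⁆ = (0 : g))
    (hnideal : ∀ x : g, ∀ y ∈ n, ⁅x, y⁆ ∈ n)
    (hmab : ∀ x ∈ m, ∀ y ∈ m, ⁅x, y⁆ = (0 : g))
    (hunimod : ∀ x : g, LinearMap.trace ℝ g (LieAlgebra.ad ℝ g x) = 0)
    (hθ0 : θ ≠ 0)
    (hθn : ∀ x ∈ n, θ x = 0)
    (hspan : n ⊔ Submodule.map J n = ⊤)
    (k : Submodule ℝ g)
    (hk : ∀ v : g, v ∈ k ↔ v ∈ n ∧ ∀ y ∈ n ⊓ Submodule.map J n, B v y = 0) :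
    ∀ v₁ ∈ k, ∀ v₂ ∈ k, ⁅J v₁, J v₂⁆ = (0 : g) := by
  have hbr : ∀ x y : g, ⁅x, y⁆ ∈ n := by
    intro x y
    have hx : x ∈ m ⊔ n := by rw [hcompl.sup_eq_top]; trivial
    have hy : y ∈ m ⊔ n := by rw [hcompl.sup_eq_top]; trivial
    obtain ⟨x1, hx1, x2, hx2, rfl⟩ := Submodule.mem_sup.1 hx
    obtain ⟨y1, hy1, y2, hy2, rfl⟩ := Submodule.mem_sup.1 hy
    rw [lie_add, add_lie, hmab x1 hx1 y1 hy1, zero_add]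
    refine n.add_mem ?_ (hnideal _ _ hy2)
    rw [← lie_skew]
    exact n.neg_mem (hnideal _ _ hx2)
  have ha : ∀ y : g, y ∈ n → J y ∈ n → y ∈ n ⊓ Submodule.map J n := by
    intro y hy hJy
    refine ⟨hy, Submodule.mem_map.2 ⟨-(J y), n.neg_mem hJy, ?_⟩⟩
    rw [map_neg, hJ2, neg_neg]
  -- `ad (J v)` preserves `a`
  have hada : ∀ v ∈ n, ∀ y ∈ n, J y ∈ n → J ⁅J v, y⁆ ∈ n := by
    intro v hv y hy hJy
    have h := hJint v y
    rw [hnab v hv y hy, hnab v hv _ hJy, map_zero, add_zero, zero_sub] at h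
    have h2 : J ⁅J v, y⁆ = ⁅J v, J y⁆ := by
      rw [← sub_eq_zero, ← h]; abel
    rw [h2]
    exact hbr _ _
  intro v₁ h₁ v₂ h₂
  obtain ⟨hn₁, ho₁⟩ := (hk v₁).1 h₁
  obtain ⟨hn₂, ho₂⟩ := (hk v₂).1 h₂
  have hw : J ⁅J v₁, J v₂⁆ ∈ n := by
    have h := hJint v₁ v₂
    rw [hnab v₁ hn₁ v₂ hn₂, zero_sub] at h
    have h2 : ⁅J v₁, J v₂⁆ = J (⁅v₁, J v₂⁆ + ⁅J v₁, v₂⁆) := by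
      rw [map_add, ← sub_eq_zero, ← neg_eq_zero, ← h]; abel
    rw [h2, hJ2]
    exact n.neg_mem (n.add_mem (hbr _ _) (hbr _ _))
  have hw0 : ⁅J v₁, J v₂⁆ ∈ n := hbr _ _
  generalize hwe : ⁅J v₁, J v₂⁆ = w at hw hw0 ⊢
  have hJJ : J (J w) ∈ n := by rw [hJ2]; exact n.neg_mem hw0
  have h := hLCK (J v₁) (J v₂) (J w)
  have e1 : B (J ⁅J v₂, J w⁆) (J v₁) = 0 := by
    rw [hJB, hBsymm]
    exact ho₁ _ (ha _ (hbr _ _) (hada v₂ hn₂ _ hw hJJ))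
  have e2 : B (J ⁅J w, J v₁⁆) (J v₂) = 0 := by
    rw [hJB, hBsymm, ← lie_skew, map_neg,
      ho₂ _ (ha _ (hbr _ _) (hada v₁ hn₁ _ hw hJJ)), neg_zero]
  have e3 : B (J (J v₂)) (J w) = 0 := by
    rw [hJ2, map_neg, LinearMap.neg_apply, ho₂ _ (ha _ hw hJJ), neg_zero]
  have e4 : B (J (J w)) (J v₁) = 0 := by
    rw [hJB, hBsymm]
    exact ho₁ _ (ha _ hw hJJ)
  rw [hwe, e1, e2, e3, e4, hθn _ hw, hJB] at h
  by_contra hne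
  have := hBpos w hne
  linarith
end

section
/- Let g be a finite-dimensional real unimodular Lie algebra with a meta-abelian decomposition g = m ⊕ n and an LCK structure (J, ⟨·,·⟩, θ) such that θ ≠ 0, θ vanishes on n, and n + J(n) = g. Set a = n ∩ J(n). Then for all u ∈ m and all x, y ∈ a one has ⟨[u, x], y⟩ + ⟨x, [u, y]⟩ = −θ(u)·⟨x, y⟩; that is, the operator x ↦ [u, x] + (θ(u)/2)·x on a is skew-symmetric with respect to ⟨·,·⟩. -/
/-- For a non-Vaisman LCK structure on a unimodular meta-abelian Lie algebra
`g = m ⊕ n` with `n + J(n) = g`, for `u ∈ m` and `x, y` in `a = n ∩ J(n)` one has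
`⟨⁅u,x⁆, y⟩ + ⟨x, ⁅u,y⁆⟩ = -θ(u)·⟨x, y⟩`; equivalently `ad u + θ(u)/2` is
skew-symmetric on `a`. -/
theorem lck_ad_skew_on_a
    (g : Type*) [LieRing g] [LieAlgebra ℝ g] [FiniteDimensional ℝ g]
    (B : g →ₗ[ℝ] g →ₗ[ℝ] ℝ) (J : g →ₗ[ℝ] g) (θ : g →ₗ[ℝ] ℝ)
    (hBsymm : ∀ x y : g, B x y = B y x)
    (hBpos : ∀ x : g, x ≠ 0 → 0 < B x x)
    (hJ2 : ∀ x : g, J (J x) = -x)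
    (hJB : ∀ x y : g, B (J x) (J y) = B x y)
    (hJint : ∀ x y : g, ⁅x, y⁆ - ⁅J x, J y⁆ + J ⁅x, J y⁆ + J ⁅J x, y⁆ = 0)
    (hθbr : ∀ x y : g, θ ⁅x, y⁆ = 0)
    (hLCK : ∀ x y z : g,
      -(B (J ⁅x, y⁆) z) - B (J ⁅y, z⁆) x - B (J ⁅z, x⁆) y =
        θ x * B (J y) z + θ y * B (J z) x + θ z * B (J x) y)
    (m n : Submodule ℝ g)
    (hcompl : IsCompl m n)
    (hnab : ∀ x ∈ n, ∀ y ∈ n, ⁅x, y⁆ = (0 : g))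
    (hnideal : ∀ x : g, ∀ y ∈ n, ⁅x, y⁆ ∈ n)
    (hmab : ∀ x ∈ m, ∀ y ∈ m, ⁅x, y⁆ = (0 : g))
    (hunimod : ∀ x : g, LinearMap.trace ℝ g (LieAlgebra.ad ℝ g x) = 0)
    (hθ0 : θ ≠ 0)
    (hθn : ∀ x ∈ n, θ x = 0)
    (hspan : n ⊔ Submodule.map J n = ⊤) :
    ∀ u ∈ m, ∀ x ∈ n ⊓ Submodule.map J n, ∀ y ∈ n ⊓ Submodule.map J n,
      B ⁅u, x⁆ y + B x ⁅u, y⁆ = -(θ u * B x y) := by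
  intro u _ x hx y hy
  have hu : u ∈ n ⊔ Submodule.map J n := by rw [hspan]; trivial
  obtain ⟨w, hw, v', hv', rfl⟩ := Submodule.mem_sup.1 hu
  obtain ⟨v, hv, rfl⟩ := Submodule.mem_map.1 hv'
  have hJn : ∀ z ∈ n ⊓ Submodule.map J n, J z ∈ n := by
    intro z hz
    obtain ⟨t, ht, rfl⟩ := Submodule.mem_map.1 hz.2
    rw [hJ2]
    exact n.neg_mem ht
  have hxn : x ∈ n := hx.1
  have hyn : y ∈ n := hy.1
  have hJy := hJn y hy
  -- `ad (J v)` commutes with `J` on `a`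
  have hcomm : J ⁅J v, J y⁆ = -⁅J v, y⁆ := by
    have h := hJint (J v) y
    rw [hJ2, neg_lie, neg_lie, hnab v hv _ hJy, hnab v hv y hyn] at h
    simp only [neg_zero, sub_zero, map_zero, add_zero] at h
    exact (neg_eq_of_add_eq_zero_right h).symm
  have hcomm2 : ⁅J v, J y⁆ = J ⁅J v, y⁆ := by
    have h := congrArg J hcomm
    rw [hJ2, map_neg] at h
    exact neg_injective h
  have h := hLCK (J v) x (J y)
  rw [hnab x hxn _ hJy, ← lie_skew (J y) (J v), hcomm2, hθn x hxn, hθn _ hJy] at h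
  simp only [map_neg, hJ2, hJB, map_zero, LinearMap.zero_apply, neg_neg, zero_mul, add_zero,
    sub_zero] at h
  rw [add_lie, add_lie, hnab w hw x hxn, hnab w hw y hyn, map_add θ, hθn w hw, zero_add, zero_add,
    zero_add, hBsymm x]
  linarith
end

section
/- Let g be a finite-dimensional real unimodular Lie algebra with a meta-abelian decomposition g = m ⊕ n and an LCK structure (J, ⟨·,·⟩, θ) such that θ ≠ 0, θ vanishes on n, and n + J(n) = g. Set a = n ∩ J(n), let k be the orthogonal complement of a in n with respect to ⟨·,·⟩, and write 2t = dim a. Then for every u ∈ m, the trace of the linear operator k → k, x ↦ [u, x], equals t·θ(u). -/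
/-- For a non-Vaisman LCK structure on a unimodular meta-abelian Lie algebra
`g = m ⊕ n` with `n + J(n) = g`, writing `2t = dim a` with `a = n ∩ J(n)` and `k`
the orthogonal complement of `a` in `n`, the trace of `x ↦ ⁅u, x⁆` on `k` equals
`t·θ(u)` for every `u ∈ m`. -/
theorem lck_trace_ad_on_k
    (g : Type*) [LieRing g] [LieAlgebra ℝ g] [FiniteDimensional ℝ g]
    (B : g →ₗ[ℝ] g →ₗ[ℝ] ℝ) (J : g →ₗ[ℝ] g) (θ : g →ₗ[ℝ] ℝ)
    (hBsymm : ∀ x y : g, B x y = B y x)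
    (hBpos : ∀ x : g, x ≠ 0 → 0 < B x x)
    (hJ2 : ∀ x : g, J (J x) = -x)
    (hJB : ∀ x y : g, B (J x) (J y) = B x y)
    (hJint : ∀ x y : g, ⁅x, y⁆ - ⁅J x, J y⁆ + J ⁅x, J y⁆ + J ⁅J x, y⁆ = 0)
    (hθbr : ∀ x y : g, θ ⁅x, y⁆ = 0)
    (hLCK : ∀ x y z : g,
      -(B (J ⁅x, y⁆) z) - B (J ⁅y, z⁆) x - B (J ⁅z, x⁆) y =
        θ x * B (J y) z + θ y * B (J z) x + θ z * B (J x) y)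
    (m n : Submodule ℝ g)
    (hcompl : IsCompl m n)
    (hnab : ∀ x ∈ n, ∀ y ∈ n, ⁅x, y⁆ = (0 : g))
    (hnideal : ∀ x : g, ∀ y ∈ n, ⁅x, y⁆ ∈ n)
    (hmab : ∀ x ∈ m, ∀ y ∈ m, ⁅x, y⁆ = (0 : g))
    (hunimod : ∀ x : g, LinearMap.trace ℝ g (LieAlgebra.ad ℝ g x) = 0)
    (hθ0 : θ ≠ 0)
    (hθn : ∀ x ∈ n, θ x = 0)
    (hspan : n ⊔ Submodule.map J n = ⊤)
    (k : Submodule ℝ g)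
    (hk : ∀ v : g, v ∈ k ↔ v ∈ n ∧ ∀ y ∈ n ⊓ Submodule.map J n, B v y = 0)
    (t : ℕ)
    (ht : Module.finrank ℝ ↥(n ⊓ Submodule.map J n) = 2 * t) :
    ∀ u ∈ m, ∀ (h : ∀ x ∈ k, (LieAlgebra.ad ℝ g u) x ∈ k),
      LinearMap.trace ℝ k ((LieAlgebra.ad ℝ g u).restrict h) = (t : ℝ) * θ u := by
  intro u hu h
  set a : Submodule ℝ g := n ⊓ Submodule.map J n with ha_def
  have haJ : ∀ x ∈ a, J x ∈ a := by
    rintro x ⟨hx, y, hy, rfl⟩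
    refine ⟨?_, Submodule.mem_map_of_mem hx⟩
    rw [hJ2]
    exact n.neg_mem hy
  have haN : ∀ x ∈ a, x ∈ n := fun x hx => hx.1
  have hB0 : ∀ x : g, B x x = 0 → x = 0 := by
    intro x hx
    by_contra hne
    exact absurd hx (hBpos x hne).ne'
  have ha : ∀ x ∈ a, (LieAlgebra.ad ℝ g u) x ∈ a := by
    intro x hx
    rw [LieAlgebra.ad_apply]
    refine ⟨hnideal u x hx.1, ?_⟩
    have hu' : u ∈ n ⊔ Submodule.map J n := by rw [hspan]; trivial
    obtain ⟨v, hv, w', ⟨w, hw, rfl⟩, rfl⟩ := Submodule.mem_sup.1 hu'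
    have h1 := hJint w x
    rw [hnab w hw x hx.1, hnab w hw (J x) (haJ x hx).1] at h1
    have h2 : J ⁅J w, x⁆ = ⁅J w, J x⁆ := by
      have h3 : -⁅J w, J x⁆ + J ⁅J w, x⁆ = 0 := by simpa using h1
      exact (neg_add_eq_zero.1 h3).symm
    rw [add_lie, hnab v hv x hx.1, zero_add]
    refine ⟨-⁅J w, J x⁆, n.neg_mem (hnideal _ _ (haJ x hx).1), ?_⟩
    rw [← h2, map_neg, hJ2, neg_neg]
  let W₀ : a →ₗ[ℝ] Module.Dual ℝ a :=
    (Module.Dual.transpose (R := ℝ) a.subtype) ∘ₗ B ∘ₗ J ∘ₗ a.subtype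
  have hW₀ : ∀ y z : a, W₀ y z = B (J y) z := fun y z => rfl
  have hinj : Function.Injective W₀ := by
    rw [← LinearMap.ker_eq_bot, LinearMap.ker_eq_bot']
    intro y hy
    have h1 : W₀ y ⟨J y, haJ y y.2⟩ = 0 := by rw [hy]; rfl
    rw [hW₀] at h1
    have h2 := hB0 _ h1
    have h3 := hJ2 (y : g)
    rw [h2, map_zero] at h3
    exact Subtype.ext (neg_eq_zero.1 h3.symm)
  let W : a ≃ₗ[ℝ] Module.Dual ℝ a :=
    LinearEquiv.ofInjectiveOfFinrankEq W₀ hinj Subspace.dual_finrank_eq.symm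
  have hW : ∀ y z : a, W y z = B (J y) z := fun y z => rfl
  set fa := (LieAlgebra.ad ℝ g u).restrict ha with hfa
  set fk := (LieAlgebra.ad ℝ g u).restrict h with hfk
  have htra : LinearMap.trace ℝ a fa = -((t : ℝ) * θ u) := by
    have hconj : W.conj (-(θ u) • LinearMap.id - fa) = Module.Dual.transpose (R := ℝ) fa := by
      ext φ z
      obtain ⟨y, rfl⟩ := W.surjective φ
      have e1 : W.conj (-(θ u) • LinearMap.id - fa) (W y) = W (-(θ u) • y - fa y) := by
        simp [LinearEquiv.conj_apply]
      rw [e1]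
      have e2 : Module.Dual.transpose (R := ℝ) fa (W y) z = W y (fa z) := rfl
      rw [e2, map_sub, map_smul, LinearMap.sub_apply, LinearMap.smul_apply, hW, hW, hW]
      have e3 : ((fa y : a) : g) = ⁅u, (y : g)⁆ := rfl
      have e4 : ((fa z : a) : g) = ⁅u, (z : g)⁆ := rfl
      rw [e3, e4, smul_eq_mul]
      have h1 := hLCK u y z
      rw [hnab y (haN _ y.2) z (haN _ z.2), hθn y (haN _ y.2), hθn z (haN _ z.2),
        ← lie_skew (z : g) u] at h1
      have h2 : B (J ⁅u, (z : g)⁆) y = - B (J y) ⁅u, (z : g)⁆ := by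
        rw [← hJB, hJ2, map_neg, LinearMap.neg_apply, hBsymm]
      simp only [map_neg, map_zero, LinearMap.neg_apply, LinearMap.zero_apply, h2] at h1
      linarith
    have h1 := congrArg (LinearMap.trace ℝ (Module.Dual ℝ a)) hconj
    rw [LinearMap.trace_conj', LinearMap.trace_transpose', map_sub, map_smul,
      LinearMap.trace_id, ht, smul_eq_mul] at h1
    push_cast at h1
    linarith
  let E₀ : (k × a × m) →ₗ[ℝ] g := k.subtype.coprod (a.subtype.coprod m.subtype)
  have hE₀ : ∀ x : k, ∀ y : a, ∀ z : m, E₀ (x, y, z) = (x : g) + (y + z) := fun _ _ _ => rfl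
  have hbij : Function.Bijective E₀ := by
    constructor
    · rw [← LinearMap.ker_eq_bot, LinearMap.ker_eq_bot']
      rintro ⟨x, y, z⟩ hxyz
      rw [hE₀] at hxyz
      have hxk := (hk x).1 x.2
      have hz : (z : g) = -((x : g) + y) := by
        rw [eq_neg_iff_add_eq_zero, ← hxyz]; abel
      have hzn : (z : g) ∈ n := by
        rw [hz]; exact n.neg_mem (n.add_mem hxk.1 (haN _ y.2))
      have hz0 : (z : g) = 0 := Submodule.disjoint_def.1 hcompl.disjoint _ z.2 hzn
      rw [hz0, add_zero] at hxyz
      have hx : (x : g) = -y := eq_neg_of_add_eq_zero_left hxyz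
      have hx0 : (x : g) = 0 := by
        apply hB0
        nth_rewrite 2 [hx]
        rw [map_neg, hxk.2 y y.2, neg_zero]
      rw [hx0, zero_add] at hxyz
      exact Prod.ext (Subtype.ext hx0) (Prod.ext (Subtype.ext hxyz) (Subtype.ext hz0))
    · intro x
      have hx : x ∈ m ⊔ n := by rw [hcompl.sup_eq_top]; trivial
      obtain ⟨p, hp, q, hq, rfl⟩ := Submodule.mem_sup.1 hx
      obtain ⟨y, hy⟩ := W.surjective ((B q).comp a.subtype)
      have hy' : ∀ z ∈ a, B (J y) z = B q z := fun z hz => by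
        have := congrArg (fun φ => φ ⟨z, hz⟩) hy
        exact this
      have hqk : q - J y ∈ k := by
        rw [hk]
        refine ⟨n.sub_mem hq (haN _ (haJ y y.2)), fun z hz => ?_⟩
        rw [map_sub, LinearMap.sub_apply, hy' z hz, sub_self]
      refine ⟨(⟨q - J y, hqk⟩, ⟨J y, haJ y y.2⟩, ⟨p, hp⟩), ?_⟩
      rw [hE₀]
      simp only
      abel
  let E := LinearEquiv.ofBijective E₀ hbij
  have hE : ∀ x : k, ∀ y : a, ∀ z : m, E (x, y, z) = (x : g) + (y + z) := fun _ _ _ => rfl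
  have hconjE : E.conj (fk.prodMap (fa.prodMap (0 : m →ₗ[ℝ] m))) = LieAlgebra.ad ℝ g u := by
    ext v
    obtain ⟨⟨x, y, z⟩, rfl⟩ := E.surjective v
    have e1 : E.conj (fk.prodMap (fa.prodMap (0 : m →ₗ[ℝ] m))) (E (x, y, z))
        = E (fk x, fa y, 0) := by
      simp [LinearEquiv.conj_apply]
    rw [e1, hE, hE, LieAlgebra.ad_apply, lie_add, lie_add, hmab u hu z z.2]
    rfl
  have hfin := congrArg (LinearMap.trace ℝ g) hconjE
  rw [LinearMap.trace_conj', hunimod, LinearMap.trace_prodMap', LinearMap.trace_prodMap',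
    map_zero, htra] at hfin
  linarith
end

section
/- Let g be a finite-dimensional real unimodular Lie algebra with a meta-abelian decomposition g = m ⊕ n and an LCK structure (J, ⟨·,·⟩, θ) such that θ ≠ 0, θ vanishes on n, and n + J(n) = g. Set a = n ∩ J(n), let k be the orthogonal complement of a in n with respect to ⟨·,·⟩, and let A ∈ g be the Lee vector, defined by θ(x) = ⟨A, x⟩ for all x ∈ g. Then the operator Ψ : k → k, Ψ(x) = [A, x], is self-adjoint: ⟨[A, x], y⟩ = ⟨x, [A, y]⟩ for all x, y ∈ k. -/
open Polynomial in
lemma lck_exists_idem {V : Type*} [AddCommGroup V] [Module ℝ V] [FiniteDimensional ℝ V]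
    (L : V →ₗ[ℝ] Module.End ℝ V) (hL : ∀ x z, L (L x z) = L x * L z) (x : V)
    (hx : ¬ IsNilpotent (L x)) : ∃ e, L e ≠ 0 ∧ IsIdempotentElem (L e) := by
  set P := L x with hP
  have hcomm : ∀ p : ℝ[X], L (aeval P p x) = aeval P p * P := by
    intro p
    induction p using Polynomial.induction_on' with
    | add p q hp hq => simp [map_add, hp, hq, add_mul]
    | monomial n c =>
      have : ∀ n : ℕ, L ((P ^ n) x) = P ^ n * P := by
        intro n
        induction n with
        | zero => simp [hP]
        | succ n ih => rw [pow_succ', Module.End.mul_apply, hP, hL, ← hP, ih, mul_assoc]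
      simp [aeval_monomial, ← Algebra.smul_def, this]
  have hint : IsIntegral ℝ P := Algebra.IsIntegral.isIntegral P
  obtain ⟨q, hq, hnd⟩ := exists_eq_pow_rootMultiplicity_mul_and_not_dvd (minpoly ℝ P)
    (minpoly.ne_zero hint) 0
  set a := (minpoly ℝ P).rootMultiplicity 0
  simp only [C_0, sub_zero] at hq hnd
  have hcop : IsCoprime (X ^ (a + 1)) q :=
    IsCoprime.pow_left ((Polynomial.prime_X.irreducible.coprime_iff_not_dvd).2 hnd)
  obtain ⟨u, v, huv⟩ := hcop
  have hmin : aeval P (X ^ a * q) = 0 := by rw [← hq]; exact minpoly.aeval ℝ P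
  have he : L (aeval P (u * X ^ a) x) = aeval P (u * X ^ (a + 1)) := by
    rw [hcomm, pow_succ, ← mul_assoc, map_mul (aeval P) (u * X ^ a), aeval_X]
  refine ⟨aeval P (u * X ^ a) x, ?_, ?_⟩
  · rw [he]
    intro h0
    apply hx
    refine ⟨a, ?_⟩
    have h1 : (X ^ a : ℝ[X]) = X ^ a * (u * X ^ (a + 1)) + v * (X ^ a * q) := by
      linear_combination (-(X ^ a : ℝ[X])) * huv
    have := congrArg (aeval P) h1
    rw [map_add, map_mul, map_mul (aeval P) v, hmin, h0] at this
    simpa using this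
  · rw [he]
    have h1 : (u * X ^ (a + 1)) * (u * X ^ (a + 1)) =
        u * X ^ (a + 1) - (u * v * X) * (X ^ a * q) := by
      linear_combination (u * X ^ (a + 1)) * huv
    show _ * _ = _
    rw [← map_mul, h1, map_sub, map_mul (aeval P) (u * v * X), hmin]
    simp

lemma lck_core {V : Type*} [AddCommGroup V] [Module ℝ V] [FiniteDimensional ℝ V]
    (L : V →ₗ[ℝ] Module.End ℝ V) (hL : ∀ x z, L (L x z) = L x * L z)
    (W : V →ₗ[ℝ] V →ₗ[ℝ] ℝ) (l : V → ℝ)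
    (hW : ∀ x y z, W (L x y) z + W y (L x z) = - l x * W y z)
    (hl : ∃ x, l x ≠ 0) (c : ℝ) (hc : 0 ≤ c)
    (htr : ∀ x, LinearMap.trace ℝ V (L x) = c * l x) : ∀ y z, W y z = 0 := by
  obtain ⟨x, hx⟩ := hl
  by_cases hn : IsNilpotent (L x)
  · obtain ⟨N, hN⟩ := hn
    set Q : Module.End ℝ V := -(L x) - (l x) • 1 with hQ
    have h1 : ∀ y z, W (L x y) z = W y (Q z) := by
      intro y z
      have := hW x y z
      simp only [hQ, LinearMap.sub_apply, LinearMap.neg_apply, LinearMap.smul_apply,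
        Module.End.one_apply, map_sub, map_neg, map_smul, smul_eq_mul]
      linarith
    have h2 : ∀ n : ℕ, ∀ y z, W ((L x ^ n) y) z = W y ((Q ^ n) z) := by
      intro n
      induction n with
      | zero => simp
      | succ n ih =>
        intro y z
        rw [pow_succ', Module.End.mul_apply, h1, ih, pow_succ, Module.End.mul_apply]
    have hu : IsUnit Q := by
      have hu1 : IsUnit (-((l x) • (1 : Module.End ℝ V))) := by
        refine IsUnit.neg ?_
        exact (isUnit_one.smul (Units.mk0 _ hx))
      have hnil : IsNilpotent (-(L x)) := IsNilpotent.neg ⟨N, hN⟩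
      have hcm : Commute (-(L x)) (-((l x) • (1 : Module.End ℝ V))) := by
        apply Commute.neg_left; apply Commute.neg_right
        exact (Commute.one_right _).smul_right _
      have := hnil.isUnit_add_right_of_commute hu1 hcm
      rw [hQ, sub_eq_add_neg]; exact this
    intro y z
    obtain ⟨R, hR⟩ := (hu.pow N).exists_right_inv
    have := h2 N y (R z)
    rw [hN, ← Module.End.mul_apply, hR] at this
    simpa using this.symm
  · obtain ⟨e, he0, hei⟩ := lck_exists_idem L hL x hn
    have htp : 0 < LinearMap.trace ℝ V (L e) := by
      have hne : LinearMap.trace ℝ V (L e) ≠ 0 := fun h =>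
        he0 ((LinearMap.IsIdempotentElem.trace_eq_zero_iff hei).1 h)
      have hge : 0 ≤ LinearMap.trace ℝ V (L e) := by
        rw [(LinearMap.IsIdempotentElem.isProj_range _ hei).trace]
        positivity
      exact lt_of_le_of_ne hge (Ne.symm hne)
    have hle : 0 < l e := by
      rw [htr] at htp
      by_contra h
      push Not at h
      nlinarith
    have hid : ∀ y, L e (L e y) = L e y := fun y => by
      rw [← Module.End.mul_apply, hei]
    intro y z
    have a1 := hW e (L e y) (L e z)
    rw [hid, hid] at a1
    have b1 : W (L e y) (L e z) = 0 := by
      have : (2 + l e) * W (L e y) (L e z) = 0 := by linarith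
      rcases mul_eq_zero.1 this with h | h
      · linarith
      · exact h
    have a2 := hW e (L e y) z
    have a3 := hW e y (L e z)
    rw [hid, b1] at a2
    rw [hid, b1] at a3
    have b2 : W (L e y) z = 0 := by
      have : (1 + l e) * W (L e y) z = 0 := by linarith
      rcases mul_eq_zero.1 this with h | h
      · linarith
      · exact h
    have b3 : W y (L e z) = 0 := by
      have : (1 + l e) * W y (L e z) = 0 := by linarith
      rcases mul_eq_zero.1 this with h | h
      · linarith
      · exact h
    have a4 := hW e y z
    rw [b2, b3] at a4
    have : l e * W y z = 0 := by linarith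
    rcases mul_eq_zero.1 this with h | h
    · linarith
    · exact h

lemma lck_trace_skew {V : Type*} [AddCommGroup V] [Module ℝ V] [FiniteDimensional ℝ V]
    (B : V →ₗ[ℝ] V →ₗ[ℝ] ℝ) (hs : ∀ x y, B x y = B y x) (hp : ∀ x, x ≠ 0 → 0 < B x x)
    (T : V →ₗ[ℝ] V) (c : ℝ) (hT : ∀ x y, B (T x) y + B x (T y) = - c * B x y) :
    LinearMap.trace ℝ V T = - c * (Module.finrank ℝ V / 2) := by
  have hsym : LinearMap.IsSymm B := ⟨fun x y => by simpa using hs x y⟩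
  obtain ⟨v, hv⟩ := LinearMap.BilinForm.exists_orthogonal_basis hsym
  rw [LinearMap.trace_eq_matrix_trace ℝ v, Matrix.trace]
  have key : ∀ i, (LinearMap.toMatrix v v T).diag i = - c / 2 := by
    intro i
    rw [Matrix.diag_apply, LinearMap.toMatrix_apply]
    have hpos := hp (v i) (v.ne_zero i)
    have h1 : B (T (v i)) (v i) = v.repr (T (v i)) i * B (v i) (v i) := by
      conv_lhs => rw [← v.sum_repr (T (v i))]
      rw [map_sum, LinearMap.sum_apply, Finset.sum_eq_single i]
      · simp
      · intro j _ hj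
        have : B (v j) (v i) = 0 := hv hj
        simp [this]
      · simp
    have h2 := hT (v i) (v i)
    rw [hs (v i) (T (v i)), h1] at h2
    have : (v.repr (T (v i)) i + c / 2) * B (v i) (v i) = 0 := by linarith
    rcases mul_eq_zero.1 this with h | h
    · linarith
    · linarith
  rw [Finset.sum_congr rfl (fun i _ => key i)]
  simp
  ring


/-- For a non-Vaisman LCK structure on a unimodular meta-abelian Lie algebra
`g = m ⊕ n` with `n + J(n) = g`, the operator `x ↦ ⁅A, x⁆` on the orthogonal
complement `k` of `a = n ∩ J(n)` in `n` is self-adjoint, where `A` is the Lee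
vector. -/
theorem lck_ad_Lee_self_adjoint
    (g : Type*) [LieRing g] [LieAlgebra ℝ g] [FiniteDimensional ℝ g]
    (B : g →ₗ[ℝ] g →ₗ[ℝ] ℝ) (J : g →ₗ[ℝ] g) (θ : g →ₗ[ℝ] ℝ)
    (hBsymm : ∀ x y : g, B x y = B y x)
    (hBpos : ∀ x : g, x ≠ 0 → 0 < B x x)
    (hJ2 : ∀ x : g, J (J x) = -x)
    (hJB : ∀ x y : g, B (J x) (J y) = B x y)
    (hJint : ∀ x y : g, ⁅x, y⁆ - ⁅J x, J y⁆ + J ⁅x, J y⁆ + J ⁅J x, y⁆ = 0)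
    (hθbr : ∀ x y : g, θ ⁅x, y⁆ = 0)
    (hLCK : ∀ x y z : g,
      -(B (J ⁅x, y⁆) z) - B (J ⁅y, z⁆) x - B (J ⁅z, x⁆) y =
        θ x * B (J y) z + θ y * B (J z) x + θ z * B (J x) y)
    (m n : Submodule ℝ g)
    (hcompl : IsCompl m n)
    (hnab : ∀ x ∈ n, ∀ y ∈ n, ⁅x, y⁆ = (0 : g))
    (hnideal : ∀ x : g, ∀ y ∈ n, ⁅x, y⁆ ∈ n)
    (hmab : ∀ x ∈ m, ∀ y ∈ m, ⁅x, y⁆ = (0 : g))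
    (hunimod : ∀ x : g, LinearMap.trace ℝ g (LieAlgebra.ad ℝ g x) = 0)
    (hθ0 : θ ≠ 0)
    (hθn : ∀ x ∈ n, θ x = 0)
    (hspan : n ⊔ Submodule.map J n = ⊤)
    (k : Submodule ℝ g)
    (hk : ∀ v : g, v ∈ k ↔ v ∈ n ∧ ∀ y ∈ n ⊓ Submodule.map J n, B v y = 0)
    (A : g) (hA : ∀ x : g, θ x = B A x) :
    ∀ x ∈ k, ∀ y ∈ k, B ⁅A, x⁆ y = B x ⁅A, y⁆ := by
  have hJB' : ∀ x y : g, B (J x) y = - B x (J y) := by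
    intro x y
    have := hJB x (J y)
    rw [hJ2] at this
    simp only [map_neg] at this
    linarith
  set a : Submodule ℝ g := n ⊓ Submodule.map J n with ha
  have haJ : ∀ x ∈ a, J x ∈ a := by
    rintro x ⟨hxn, w, hw, rfl⟩
    refine ⟨?_, ⟨J w, hxn, rfl⟩⟩
    rw [hJ2]; exact n.neg_mem hw
  have han : ∀ x ∈ a, x ∈ n := fun x hx => hx.1
  have hkn : ∀ x ∈ k, x ∈ n := fun x hx => ((hk x).1 hx).1
  have hka : ∀ x ∈ k, ∀ y ∈ a, B x y = 0 := fun x hx => ((hk x).1 hx).2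
  have mem_a : ∀ x ∈ n, J x ∈ n → x ∈ a := by
    intro x hx hJx
    refine ⟨hx, ⟨-(J x), n.neg_mem hJx, ?_⟩⟩
    simp [hJ2]
  have hdisj : ∀ x ∈ k, x ∈ a → x = 0 := by
    intro x hx hxa
    by_contra h
    have := hBpos x h
    rw [hka x hx x hxa] at this
    exact lt_irrefl _ this
  -- orthogonal projection onto a
  have hcomp : IsCompl a (LinearMap.BilinForm.orthogonal B a) := by
    have hsym : LinearMap.IsSymm B := ⟨fun x y => by simpa using hBsymm x y⟩
    rw [LinearMap.BilinForm.isCompl_orthogonal_iff_disjoint hsym.isRefl]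
    rw [Submodule.disjoint_def]
    intro x hx hx2
    by_contra h
    have h1 := hBpos x h
    have h2 : B x x = 0 := hx2 x hx
    linarith
  set p := a.projection _ hcomp with hp
  have hpa : ∀ x, p x ∈ a := fun x => Submodule.projection_apply_mem hcomp x
  have hpk : ∀ x ∈ n, x - p x ∈ k := by
    intro x hx
    rw [hk]
    refine ⟨n.sub_mem hx (han _ (hpa x)), fun y hy => ?_⟩
    have h1 : x - p x ∈ LinearMap.BilinForm.orthogonal B a := by
      rw [hp, ← Submodule.projection_eq_self_sub_projection hcomp]
      exact Submodule.projection_apply_mem _ x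
    rw [hBsymm]
    exact h1 y hy
  have hpk0 : ∀ x ∈ k, p x = 0 := by
    intro x hx
    rw [hp, Submodule.projection_apply_eq_zero_iff]
    intro y hy
    show B y x = 0
    rw [hBsymm]; exact hka x hx y hy
  have hpa1 : ∀ x ∈ a, p x = x := fun x hx => Submodule.projection_apply_of_mem_left hcomp hx
  -- decomposition of g
  have hdec : ∀ z : g, ∃ u ∈ n, ∃ y ∈ k, z = u + J y := by
    intro z
    have hz : z ∈ n ⊔ Submodule.map J n := by rw [hspan]; trivial
    obtain ⟨u, hu, w, ⟨y, hy, rfl⟩, rfl⟩ := Submodule.mem_sup.1 hz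
    refine ⟨u + J (p y), n.add_mem hu (han _ (haJ _ (hpa y))), y - p y, hpk y hy, ?_⟩
    rw [map_sub]; abel
  have hskew : ∀ x y : g, ⁅x, y⁆ = -⁅y, x⁆ := fun x y => (lie_skew x y).symm
  -- [g, g] ⊆ n
  have hgg : ∀ x y : g, ⁅x, y⁆ ∈ n := by
    intro x y
    have hdm : ∀ z : g, ∃ u ∈ m, ∃ v ∈ n, u + v = z := by
      intro z
      have hz : z ∈ m ⊔ n := by rw [hcompl.sup_eq_top]; trivial
      exact Submodule.mem_sup.1 hz
    obtain ⟨u, hu, v, hv, rfl⟩ := hdm x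
    obtain ⟨u', hu', v', hv', rfl⟩ := hdm y
    rw [add_lie, lie_add, hmab u hu u' hu', zero_add]
    refine n.add_mem (hnideal _ _ hv') ?_
    rw [hskew]; exact n.neg_mem (hnideal _ _ hv)
  -- a : ideal, with J commuting
  have haJcomm : ∀ y ∈ n, ∀ x ∈ a, ⁅J y, J x⁆ = J ⁅J y, x⁆ := by
    intro y hy x hx
    have := hJint y x
    rw [hnab y hy x (han x hx), hnab y hy (J x) (han _ (haJ x hx))] at this
    simp only [map_zero] at this
    rw [← sub_eq_zero, ← neg_eq_zero, ← this]
    abel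
  have haid : ∀ y ∈ n, ∀ x ∈ a, ⁅J y, x⁆ ∈ a := by
    intro y hy x hx
    refine mem_a _ (hnideal _ _ (han x hx)) ?_
    rw [← haJcomm y hy x hx]
    exact hnideal _ _ (han _ (haJ x hx))
  have haid' : ∀ z : g, ∀ x ∈ a, ⁅z, x⁆ ∈ a := by
    intro z x hx
    obtain ⟨u, hu, y, hy, rfl⟩ := hdec z
    rw [add_lie, hnab u hu x (han x hx), zero_add]
    exact haid y (hkn y hy) x hx
  -- k : ideal
  have hkid : ∀ z : g, ∀ x ∈ k, ⁅z, x⁆ ∈ k := by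
    intro z x hx
    rw [hk]
    refine ⟨hnideal _ _ (hkn x hx), fun y hy => ?_⟩
    have h := hLCK x (J y) z
    rw [hnab x (hkn x hx) _ (han _ (haJ y hy)), hθn x (hkn x hx), hθn _ (han _ (haJ y hy))] at h
    have h1 : B (J ⁅J y, z⁆) x = 0 := by
      rw [hBsymm]
      refine hka x hx _ (haJ _ ?_)
      rw [hskew]; exact a.neg_mem (haid' z _ (haJ y hy))
    have h2 : B (J x) (J y) = 0 := by rw [hJB]; exact hka x hx y hy
    rw [h1, h2, hJB] at h
    simp at h
    exact h
  -- commutativity of the product on k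
  have hJJa : ∀ x ∈ k, ∀ y ∈ k, ⁅J x, y⁆ = ⁅J y, x⁆ ∧ ⁅J x, J y⁆ = 0 := by
    intro x hx y hy
    have h := hJint x y
    rw [hnab x (hkn x hx) y (hkn y hy)] at h
    have h1 : ⁅J x, J y⁆ = J (⁅x, J y⁆ + ⁅J x, y⁆) := by
      rw [map_add, ← sub_eq_zero, ← neg_eq_zero, ← h]
      abel
    have hmk : ⁅x, J y⁆ + ⁅J x, y⁆ ∈ k := by
      refine k.add_mem ?_ (hkid _ _ hy)
      rw [hskew]; exact k.neg_mem (hkid _ _ hx)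
    have h0 : ⁅x, J y⁆ + ⁅J x, y⁆ = 0 := by
      refine hdisj _ hmk (mem_a _ (hkn _ hmk) ?_)
      rw [← h1]; exact hgg _ _
    refine ⟨?_, by rw [h1, h0, map_zero]⟩
    rw [hskew x (J y)] at h0
    exact (neg_add_eq_zero.1 h0).symm
  let L : k →ₗ[ℝ] Module.End ℝ k := LinearMap.mk₂ ℝ
    (fun x y : k => (⟨⁅J (x : g), (y : g)⁆, hkid _ _ y.2⟩ : k))
    (fun x x' y => Subtype.ext (by simp))
    (fun c x y => Subtype.ext (by simp))
    (fun x y y' => Subtype.ext (by simp))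
    (fun c x y => Subtype.ext (by simp))
  have hLapp : ∀ x y : k, ((L x y : k) : g) = ⁅J (x : g), (y : g)⁆ := fun x y => rfl
  have hLmul : ∀ x z, L (L x z) = L x * L z := by
    intro x z
    ext w
    rw [Module.End.mul_apply, hLapp, hLapp x (L z w), (hJJa _ (L x z).2 _ w.2).1,
      hLapp z w, (hJJa z z.2 w w.2).1, hLapp]
    have := leibniz_lie (J (w : g)) (J (x : g)) (z : g)
    rw [(hJJa w w.2 x x.2).2, zero_lie, zero_add] at this
    exact this
  let W : k →ₗ[ℝ] k →ₗ[ℝ] ℝ := (B.comp J).domRestrict₁₂ k k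
  have hWapp : ∀ x y : k, W x y = B (J (x : g)) (y : g) := fun x y => rfl
  have hW : ∀ x y z, W (L x y) z + W y (L x z) = - θ (J (x : g)) * W y z := by
    intro x y z
    rw [hWapp, hWapp, hWapp, hLapp, hLapp]
    have h := hLCK (J (x : g)) y z
    rw [hnab y (hkn y y.2) z (hkn z z.2), hθn y (hkn y y.2), hθn z (hkn z z.2),
      hskew z (J (x : g)), map_neg, map_neg, LinearMap.neg_apply,
      hJB' ⁅J (x : g), (z : g)⁆ y, hBsymm _ (J (y : g))] at h
    simp at h
    linarith
  have hl : ∃ x : k, θ (J (x : g)) ≠ 0 := by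
    by_contra hcon
    push Not at hcon
    apply hθ0
    ext z
    obtain ⟨u, hu, y, hy, rfl⟩ := hdec z
    rw [map_add, hθn u hu, hcon ⟨y, hy⟩]
    simp
  have htr : ∀ x : k, LinearMap.trace ℝ k (L x) =
      ((Module.finrank ℝ a : ℝ) / 2) * θ (J (x : g)) := by
    intro x
    set f : g →ₗ[ℝ] g := LieAlgebra.ad ℝ g (J (x : g)) with hf
    have hfapp : ∀ y, f y = ⁅J (x : g), y⁆ := fun y => rfl
    have hT := hunimod (J (x : g))
    rw [← hf] at hT
    have hsplit : f = p ∘ₗ f + (f - p ∘ₗ f) := by abel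
    have e1 : LinearMap.trace ℝ g (p ∘ₗ f) = - θ (J (x : g)) * (Module.finrank ℝ a / 2) := by
      rw [← LinearMap.trace_restrict_eq_of_forall_mem a (p ∘ₗ f) (fun y => hpa _)]
      apply lck_trace_skew (B.domRestrict₁₂ a a) (fun y z => hBsymm y z)
        (fun y hy => hBpos y (fun h => hy (Subtype.ext h)))
      intro y z
      show B (p ⁅J (x : g), (y : g)⁆) z + B y (p ⁅J (x : g), (z : g)⁆) = - θ (J (x : g)) * B y z
      rw [hpa1 _ (haid' _ _ y.2), hpa1 _ (haid' _ _ z.2)]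
      have hJz := haJ z z.2
      have h := hLCK (J (x : g)) y (J (z : g))
      rw [hnab y (han y y.2) _ (han _ hJz), hθn y (han y y.2), hθn _ (han _ hJz),
        hskew (J (z : g)) (J (x : g)), haJcomm x (hkn x x.2) z z.2, hJB, hJB,
        map_neg, hJ2, neg_neg] at h
      simp at h
      rw [hBsymm ⁅J (x : g), (z : g)⁆ y, hJB] at h
      linarith
    have e2 : LinearMap.trace ℝ g (f - p ∘ₗ f) = LinearMap.trace ℝ k (L x) := by
      have hm : ∀ y, (f - p ∘ₗ f) y ∈ k := fun y => hpk _ (hgg _ _)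
      rw [← LinearMap.trace_restrict_eq_of_forall_mem k (f - p ∘ₗ f) hm]
      congr 1
      ext y
      show ⁅J (x : g), (y : g)⁆ - p ⁅J (x : g), (y : g)⁆ = ⁅J (x : g), (y : g)⁆
      rw [hpk0 _ (hkid _ _ y.2), sub_zero]
    rw [hsplit, map_add, e1, e2] at hT
    linarith
  have hW0 := lck_core L hLmul W (fun x => θ (J (x : g))) hW hl _ (by positivity) htr
  -- conclusion
  intro x hx y hy
  obtain ⟨u, hu, y0, hy0, hAe⟩ := hdec A
  have hlam : ∀ x ∈ k, θ (J x) = B y0 x := by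
    intro x hx
    have h1 : B u (J x) = 0 := by
      have hu' : u = p u + (u - p u) := by abel
      rw [hu', map_add, LinearMap.add_apply]
      have h2 : B (p u) (J x) = 0 := by
        have := hJB' (p u) x
        rw [hBsymm (J (p u)) x, hka x hx _ (haJ _ (hpa u))] at this
        linarith
      have h3 : B (u - p u) (J x) = 0 := by
        have := hW0 ⟨x, hx⟩ ⟨u - p u, hpk u hu⟩
        rw [hWapp] at this
        rw [hBsymm]; exact this
      rw [h2, h3, add_zero]
    rw [hA, hAe, map_add, LinearMap.add_apply, h1, hJB, zero_add]
  have hAx : ∀ x ∈ k, ⁅A, x⁆ = ⁅J y0, x⁆ := by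
    intro x hx
    rw [hAe, add_lie, hnab u hu x (hkn x hx), zero_add]
  rw [hAx x hx, hAx y hy]
  have h := hLCK (J x) (J y) y0
  rw [(hJJa x hx y hy).2, hθn y0 (hkn y0 hy0), hlam x hx, hlam y hy,
    hskew y0 (J x), (hJJa y hy y0 hy0).1, (hJJa x hx y0 hy0).1, map_neg, hJB, hJ2, hJB] at h
  simp only [map_zero, map_neg, LinearMap.neg_apply, LinearMap.zero_apply, hJB] at h
  rw [hBsymm y y0] at h
  rw [hBsymm x]
  linarith
end

section
/- Let g be a finite-dimensional real unimodular Lie algebra with a meta-abelian decomposition g = m ⊕ n and an LCK structure (J, ⟨·,·⟩, θ) such that θ ≠ 0, θ vanishes on n, and n + J(n) = g. Set a = n ∩ J(n), let k be the orthogonal complement of a in n with respect to ⟨·,·⟩, write s = dim k and 2t = dim a, and let A ∈ g be the Lee vector, defined by θ(x) = ⟨A, x⟩ for all x ∈ g. Then there exists λ₀ ∈ ℝ such that [A, x] = λ₀·x for all x ∈ k, and this λ₀ satisfies s·λ₀ = t·‖A‖². -/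
theorem lckaux_proj {g : Type*} [AddCommGroup g] [Module ℝ g] [FiniteDimensional ℝ g]
    (B : g →ₗ[ℝ] g →ₗ[ℝ] ℝ)
    (hBpos : ∀ x : g, x ≠ 0 → 0 < B x x) (p : Submodule ℝ g) :
    ∃ P : g →ₗ[ℝ] g, (∀ x, P x ∈ p) ∧ ∀ x, ∀ y ∈ p, B (P x) y = B x y := by
  let R : g →ₗ[ℝ] Module.Dual ℝ p := (Module.Dual.transpose (R := ℝ) p.subtype) ∘ₗ B
  have hR : ∀ x (y : p), R x y = B x y := fun x y => rfl
  have hinj : Function.Injective (R ∘ₗ p.subtype) := by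
    rw [injective_iff_map_eq_zero]
    intro x hx
    by_contra h
    have h1 := hBpos x (by simpa using h)
    have h2 : R x x = 0 := by
      have := congrArg (fun f => f x) hx
      simpa using this
    rw [hR] at h2
    linarith
  let E := LinearEquiv.ofInjectiveOfFinrankEq (R ∘ₗ p.subtype) hinj
    (by rw [Subspace.dual_finrank_eq])
  refine ⟨p.subtype ∘ₗ E.symm.toLinearMap ∘ₗ R, fun x => by simp, fun x y hy => ?_⟩
  have h : E (E.symm (R x)) = R x := by simp
  have h3 : R (E.symm (R x) : p) = R x := h
  have := congrArg (fun f => f ⟨y, hy⟩) h3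
  exact this

theorem lckaux_skew {V : Type*} [AddCommGroup V] [Module ℝ V] [FiniteDimensional ℝ V]
    (B : V →ₗ[ℝ] V →ₗ[ℝ] ℝ)
    (hBpos : ∀ x : V, x ≠ 0 → 0 < B x x) (M : V →ₗ[ℝ] V)
    (hM : ∀ x y, B (M x) y = - B x (M y)) : LinearMap.trace ℝ V M = 0 := by
  have hinj : Function.Injective B := by
    rw [injective_iff_map_eq_zero]
    intro x hx
    by_contra h
    have h1 := hBpos x h
    rw [hx] at h1
    simp at h1
  let E : V ≃ₗ[ℝ] Module.Dual ℝ V :=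
    LinearEquiv.ofInjectiveOfFinrankEq B hinj (Subspace.dual_finrank_eq (K := ℝ) (V := V)).symm
  have hE : ∀ x, E x = B x := fun x => rfl
  have h1 : E.conj M = Module.Dual.transpose (R := ℝ) (-M) := by
    ext f y
    obtain ⟨x, rfl⟩ := E.surjective f
    have h0 : E.conj M (E x) = E (M x) := by simp [LinearEquiv.conj_apply]
    rw [h0, hE, hE, hM]
    simp [Module.Dual.transpose_apply]
  have h2 := LinearMap.trace_conj' M E
  rw [h1, LinearMap.trace_transpose', map_neg] at h2
  linarith

theorem lckaux_alg {g : Type*} [AddCommGroup g] [Module ℝ g]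
    (B : g →ₗ[ℝ] g →ₗ[ℝ] ℝ)
    (hBsymm : ∀ x y : g, B x y = B y x)
    (hBpos : ∀ x : g, x ≠ 0 → 0 < B x x) (k : Submodule ℝ g)
    (M : g →ₗ[ℝ] g →ₗ[ℝ] g) (η : g →ₗ[ℝ] ℝ)
    (hM : ∀ u ∈ k, ∀ x ∈ k, M u x ∈ k)
    (hc : ∀ u ∈ k, ∀ x ∈ k, M u x = M x u)
    (ha : ∀ u ∈ k, ∀ v ∈ k, ∀ x ∈ k, M u (M v x) = M v (M u x))
    (key : ∀ x ∈ k, ∀ u ∈ k, ∀ v ∈ k,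
      B (M u x) v - B (M v x) u = η v * B x u - η u * B x v)
    (e : g) (he : e ∈ k) (heη : ∀ u ∈ k, B e u = η u) (hne : η e ≠ 0) :
    ∃ lam : ℝ, ∀ x ∈ k, M e x = lam • x := by
  have zero_of : ∀ x, B x x = 0 → x = 0 := fun x hx => by
    by_contra h
    exact (hBpos x h).ne' hx
  have I : ∀ x ∈ k, ∀ u ∈ k, η (M x u) + η x * η u = B (M e x) u + η e * B x u := by
    intro x hx u hu
    have h := key x hx u hu e he
    rw [hBsymm (M u x) e, heη _ (hM u hu x hx), hBsymm x e, heη x hx, hc u hu x hx] at h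
    linarith
  have Tsymm : ∀ x ∈ k, ∀ u ∈ k, B (M e x) u = B x (M e u) := by
    intro x hx u hu
    have h1 := I x hx u hu
    have h2 := I u hu x hx
    rw [hc u hu x hx, hBsymm u x, hBsymm (M e u) x] at h2
    linarith
  have Te : ∀ x ∈ k, ∀ u ∈ k, η (M e x) * η u = η (M e u) * η x := by
    intro x hx u hu
    have h1 := I _ (hM e he x hx) u hu
    have h2 := I _ (hM e he u hu) x hx
    have h3 : M (M e x) u = M e (M x u) := by
      rw [hc _ (hM e he x hx) u hu, ha u hu e he x hx, hc u hu x hx]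
    have h4 : M (M e u) x = M e (M x u) := by
      rw [hc _ (hM e he u hu) x hx, ha x hx e he u hu]
    rw [h3] at h1
    rw [h4] at h2
    have h5 := Tsymm _ (hM e he x hx) u hu
    have h6 := hBsymm (M e (M e u)) x
    have h7 := Tsymm x hx _ (hM e he u hu)
    have h8 := Tsymm x hx u hu
    have h9 := hBsymm (M e u) x
    rw [h6, ← h7, h9, ← h8, ← h5] at h2
    linarith
  set lam := η (M e e) / η e with hlam
  have hηT : ∀ x ∈ k, η (M e x) = lam * η x := by
    intro x hx
    have := Te x hx e he
    rw [hlam]; field_simp; linarith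
  have hee : M e e = lam • e := by
    have hd : M e e - lam • e ∈ k := k.sub_mem (hM e he e he) (k.smul_mem _ he)
    have : ∀ u ∈ k, B (M e e - lam • e) u = 0 := by
      intro u hu
      have h1 := Tsymm e he u hu
      rw [heη _ (hM e he u hu), hηT u hu] at h1
      simp [h1, heη u hu]
    exact sub_eq_zero.mp (zero_of _ (this _ hd))
  have hTT : ∀ x ∈ k, M e (M e x) = lam • M e x := by
    intro x hx
    rw [hc e he x hx, ha e he x hx e he, hee, map_smul]
  refine ⟨lam, fun x hx => ?_⟩
  by_cases hl : lam = 0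
  · rw [hl, zero_smul]
    apply zero_of
    rw [Tsymm x hx _ (hM e he x hx), hTT x hx, hl]
    simp
  · set y := M e x - lam • x with hy
    have hyk : y ∈ k := k.sub_mem (hM e he x hx) (k.smul_mem _ hx)
    have hTy : M e y = 0 := by rw [hy, map_sub, hTT x hx, map_smul, sub_self]
    have hηy : η y = 0 := by rw [hy, map_sub, hηT x hx, map_smul, smul_eq_mul, sub_self]
    have h1 := I y hyk y hyk
    have h2 := hηT _ (hM y hyk y hyk)
    rw [ha e he y hyk y hyk, hTy, map_zero, map_zero] at h2
    have h3 : η (M y y) = 0 := by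
      rcases mul_eq_zero.mp h2.symm with h | h
      · exact absurd h hl
      · exact h
    rw [h3, hηy, hTy] at h1
    have h4 : B y y = 0 := by
      have : η e * B y y = 0 := by simpa using h1.symm
      exact (mul_eq_zero.mp this).resolve_left hne
    exact sub_eq_zero.mp (zero_of y h4)

/-- For a non-Vaisman LCK structure on a unimodular meta-abelian Lie algebra
`g = m ⊕ n` with `n + J(n) = g`, writing `s = dim k` and `2t = dim a`, the Lee
vector `A` acts on `k` as multiplication by a scalar `λ₀` with `s·λ₀ = t·‖A‖²`. -/
theorem lck_ad_Lee_is_scalar_on_k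
    (g : Type*) [LieRing g] [LieAlgebra ℝ g] [FiniteDimensional ℝ g]
    (B : g →ₗ[ℝ] g →ₗ[ℝ] ℝ) (J : g →ₗ[ℝ] g) (θ : g →ₗ[ℝ] ℝ)
    (hBsymm : ∀ x y : g, B x y = B y x)
    (hBpos : ∀ x : g, x ≠ 0 → 0 < B x x)
    (hJ2 : ∀ x : g, J (J x) = -x)
    (hJB : ∀ x y : g, B (J x) (J y) = B x y)
    (hJint : ∀ x y : g, ⁅x, y⁆ - ⁅J x, J y⁆ + J ⁅x, J y⁆ + J ⁅J x, y⁆ = 0)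
    (hθbr : ∀ x y : g, θ ⁅x, y⁆ = 0)
    (hLCK : ∀ x y z : g,
      -(B (J ⁅x, y⁆) z) - B (J ⁅y, z⁆) x - B (J ⁅z, x⁆) y =
        θ x * B (J y) z + θ y * B (J z) x + θ z * B (J x) y)
    (m n : Submodule ℝ g)
    (hcompl : IsCompl m n)
    (hnab : ∀ x ∈ n, ∀ y ∈ n, ⁅x, y⁆ = (0 : g))
    (hnideal : ∀ x : g, ∀ y ∈ n, ⁅x, y⁆ ∈ n)
    (hmab : ∀ x ∈ m, ∀ y ∈ m, ⁅x, y⁆ = (0 : g))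
    (hunimod : ∀ x : g, LinearMap.trace ℝ g (LieAlgebra.ad ℝ g x) = 0)
    (hθ0 : θ ≠ 0)
    (hθn : ∀ x ∈ n, θ x = 0)
    (hspan : n ⊔ Submodule.map J n = ⊤)
    (k : Submodule ℝ g)
    (hk : ∀ v : g, v ∈ k ↔ v ∈ n ∧ ∀ y ∈ n ⊓ Submodule.map J n, B v y = 0)
    (s t : ℕ)
    (hs : Module.finrank ℝ ↥k = s)
    (ht : Module.finrank ℝ ↥(n ⊓ Submodule.map J n) = 2 * t)
    (A : g) (hA : ∀ x : g, θ x = B A x) :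
    ∃ lam : ℝ, (∀ x ∈ k, ⁅A, x⁆ = lam • x) ∧ (s : ℝ) * lam = (t : ℝ) * B A A := by
  set a : Submodule ℝ g := n ⊓ Submodule.map J n with hadef
  have zero_of : ∀ x, B x x = 0 → x = 0 := fun x hx => by
    by_contra h
    exact (hBpos x h).ne' hx
  have hJs : ∀ x y, B (J x) y = - B x (J y) := fun x y => by
    rw [← hJB x (J y), hJ2, map_neg, neg_neg]
  have ha_n : ∀ x ∈ a, x ∈ n := fun x hx => hx.1
  have haJ : ∀ x ∈ a, J x ∈ a := by
    rintro x ⟨hx, y, hy, rfl⟩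
    refine ⟨?_, J y, hx, rfl⟩
    rw [hJ2]; exact n.neg_mem hy
  have ha_mem : ∀ x ∈ n, J x ∈ n → x ∈ a := fun x hx hJx =>
    ⟨hx, -J x, n.neg_mem hJx, by simp [hJ2]⟩
  have hkn : ∀ x ∈ k, x ∈ n := fun x hx => ((hk x).1 hx).1
  have hka : ∀ x ∈ k, ∀ y ∈ a, B x y = 0 := fun x hx => ((hk x).1 hx).2
  have hka0 : ∀ x ∈ k, x ∈ a → x = 0 := fun x hx hxa => zero_of x (hka x hx x hxa)
  -- orthogonal projection on a
  obtain ⟨P, hPa, hPB⟩ := lckaux_proj B hBpos a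
  have hPk : ∀ x ∈ n, x - P x ∈ k := by
    intro x hx
    refine (hk _).2 ⟨n.sub_mem hx (ha_n _ (hPa x)), fun y hy => ?_⟩
    rw [map_sub, LinearMap.sub_apply, hPB x y hy, sub_self]
  have hP0 : ∀ x, (∀ y ∈ a, B x y = 0) → P x = 0 := fun x hx =>
    zero_of _ (by rw [hPB x _ (hPa x), hx _ (hPa x)])
  have hP1 : ∀ x ∈ a, P x = x := by
    intro x hx
    have hm : x - P x ∈ a := a.sub_mem hx (hPa x)
    refine (sub_eq_zero.mp (zero_of _ ?_)).symm
    rw [map_sub B, LinearMap.sub_apply, hPB x _ hm, sub_self]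
  have dec1 : ∀ z : g, ∃ v ∈ n, ∃ u ∈ n, z = v + J u := by
    intro z
    have : z ∈ n ⊔ Submodule.map J n := by rw [hspan]; trivial
    obtain ⟨v, hv, w, ⟨u, hu, rfl⟩, rfl⟩ := Submodule.mem_sup.1 this
    exact ⟨v, hv, u, hu, rfl⟩
  have dec : ∀ z : g, ∃ w ∈ a, ∃ p ∈ k, ∃ q ∈ k, z = w + p + J q := by
    intro z
    obtain ⟨v, hv, u, hu, rfl⟩ := dec1 z
    refine ⟨P v + J (P u), a.add_mem (hPa v) (haJ _ (hPa u)), _, hPk v hv, _, hPk u hu, ?_⟩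
    rw [map_sub]; abel
  have hgg : ∀ x y : g, ⁅x, y⁆ ∈ n := by
    intro x y
    have hx : x ∈ m ⊔ n := by rw [hcompl.sup_eq_top]; trivial
    have hy : y ∈ m ⊔ n := by rw [hcompl.sup_eq_top]; trivial
    obtain ⟨x1, hx1, x2, hx2, rfl⟩ := Submodule.mem_sup.1 hx
    obtain ⟨y1, hy1, y2, hy2, rfl⟩ := Submodule.mem_sup.1 hy
    rw [lie_add, add_lie, hmab x1 hx1 y1 hy1, zero_add]
    refine n.add_mem ?_ (hnideal _ _ hy2)
    rw [← lie_skew]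
    exact n.neg_mem (hnideal _ _ hx2)
  -- ad (J u) commutes with J on a
  have hcommJ : ∀ u ∈ n, ∀ x ∈ a, ⁅J u, J x⁆ = J ⁅J u, x⁆ := by
    intro u hu x hx
    have h := hJint x u
    rw [hnab x (ha_n x hx) u hu, hnab (J x) (ha_n _ (haJ x hx)) u hu, map_zero, add_zero,
      zero_sub, ← lie_skew (J x) (J u), ← lie_skew x (J u), map_neg, neg_neg] at h
    exact add_neg_eq_zero.mp h
  have ha_ideal' : ∀ u ∈ n, ∀ x ∈ a, ⁅J u, x⁆ ∈ a := by
    intro u hu x hx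
    refine ha_mem _ (hgg _ _) ?_
    rw [← hcommJ u hu x hx]; exact hgg _ _
  have ha_ideal : ∀ z : g, ∀ x ∈ a, ⁅z, x⁆ ∈ a := by
    intro z x hx
    obtain ⟨v, hv, u, hu, rfl⟩ := dec1 z
    rw [add_lie, hnab v hv x (ha_n x hx), zero_add]
    exact ha_ideal' u hu x hx
  -- omega identity on n
  have hω : ∀ z : g, ∀ x ∈ n, ∀ y ∈ n,
      B (J ⁅z, x⁆) y + B (J x) ⁅z, y⁆ = - θ z * B (J x) y := by
    intro z x hx y hy
    have h := hLCK x y z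
    rw [hnab x hx y hy, hθn x hx, hθn y hy, ← lie_skew y z, map_zero, map_zero] at h
    have h2 : B (J (-⁅z, y⁆)) x = B (J x) ⁅z, y⁆ := by
      rw [hJs, map_neg, LinearMap.neg_apply, neg_neg, hBsymm]
    rw [h2] at h
    simp at h
    linarith
  have hk_ideal : ∀ z : g, ∀ x ∈ k, ⁅z, x⁆ ∈ k := by
    intro z x hx
    refine (hk _).2 ⟨hgg _ _, fun y hy => ?_⟩
    have h := hω z x (hkn x hx) (J y) (ha_n _ (haJ y hy))
    rw [hJB, hJB, hka x hx y hy, hJs x, hka x hx _ (haJ _ (ha_ideal z _ (haJ y hy)))] at h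
    simpa using h
  have hJk1 : ∀ x ∈ k, ∀ u ∈ k, ⁅J x, J u⁆ = J (⁅J x, u⁆ - ⁅J u, x⁆) := by
    intro x hx u hu
    have h := hJint x u
    rw [hnab x (hkn x hx) u (hkn u hu), ← lie_skew x (J u), map_neg] at h
    rw [map_sub, ← sub_eq_zero, ← neg_eq_zero, ← h]
    abel
  have hc : ∀ x ∈ k, ∀ u ∈ k, ⁅J x, u⁆ = ⁅J u, x⁆ := by
    intro x hx u hu
    have hm : ⁅J x, u⁆ - ⁅J u, x⁆ ∈ k := k.sub_mem (hk_ideal _ _ hu) (hk_ideal _ _ hx)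
    refine sub_eq_zero.mp (hka0 _ hm (ha_mem _ (hkn _ hm) ?_))
    rw [← hJk1 x hx u hu]; exact hgg _ _
  have hJk : ∀ x ∈ k, ∀ u ∈ k, ⁅J x, J u⁆ = 0 := by
    intro x hx u hu
    rw [hJk1 x hx u hu, hc x hx u hu, sub_self, map_zero]
  have hassoc : ∀ u ∈ k, ∀ v ∈ k, ∀ x ∈ k, ⁅J u, ⁅J v, x⁆⁆ = ⁅J v, ⁅J u, x⁆⁆ := by
    intro u hu v hv x _
    rw [leibniz_lie, hJk u hu v hv, zero_lie, zero_add]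
  have key : ∀ x ∈ k, ∀ u ∈ k, ∀ v ∈ k,
      B ⁅J u, x⁆ v - B ⁅J v, x⁆ u = θ (J v) * B x u - θ (J u) * B x v := by
    intro x hx u hu v hv
    have h := hLCK x (J u) (J v)
    rw [hJk u hu v hv, hθn x (hkn x hx), ← lie_skew x (J u), hJ2 v, hJB x u, hJB ⁅J v, x⁆ u,
      map_neg, map_neg, LinearMap.neg_apply, hJB, map_neg, LinearMap.neg_apply, hBsymm v x] at h
    simp at h
    linarith
  -- the vector e
  obtain ⟨Q, hQk, hQB⟩ := lckaux_proj B hBpos k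
  set e := - Q (J A) with hedef
  have he : e ∈ k := k.neg_mem (hQk _)
  have heη : ∀ u ∈ k, B e u = θ (J u) := by
    intro u hu
    rw [hedef, map_neg, LinearMap.neg_apply, hQB _ u hu, hJs, neg_neg, hA]
  have hne' : e ≠ 0 := by
    intro h0
    apply hθ0
    ext z
    obtain ⟨w, hw, p, hp, q, hq, rfl⟩ := dec z
    rw [map_add, map_add, hθn w (ha_n w hw), hθn p (hkn p hp), ← heη q hq, h0]
    simp
  have hepos : 0 < θ (J e) := by
    rw [← heη e he]; exact hBpos e hne'
  obtain ⟨lam, hlam⟩ := lckaux_alg B hBsymm hBpos k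
    ((LieAlgebra.ad ℝ g : g →ₗ[ℝ] (g →ₗ[ℝ] g)) ∘ₗ J) (θ ∘ₗ J)
    (fun u _ x hx => hk_ideal _ x hx) (fun u hu x hx => hc u hu x hx)
    (fun u hu v hv x hx => hassoc u hu v hv x hx)
    (fun x hx u hu v hv => key x hx u hu v hv) e he heη hepos.ne'
  replace hlam : ∀ x ∈ k, ⁅J e, x⁆ = lam • x := hlam
  have htr : (s : ℝ) * lam = t * θ (J e) := by
    set D : g →ₗ[ℝ] g := LieAlgebra.ad ℝ g (J e) with hD
    have hDx : ∀ x, D x = ⁅J e, x⁆ := fun x => rfl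
    have h0 : LinearMap.trace ℝ g D = 0 := hunimod (J e)
    have hsplit : D = D ∘ₗ P + D ∘ₗ (LinearMap.id - P) := by
      ext x; simp
    have hr1 : ∀ x, (D ∘ₗ P) x ∈ a := fun x => ha_ideal _ _ (hPa x)
    have hr2 : ∀ x, (D ∘ₗ (LinearMap.id - P)) x ∈ k := by
      intro x
      obtain ⟨w, hw, p, hp, q, hq, rfl⟩ := dec x
      have hp0 : P p = 0 := hP0 p (hka p hp)
      have hq0 : P (J q) = 0 := hP0 _ (fun y hy => by
        rw [hJs, hka q hq _ (haJ y hy), neg_zero])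
      have : (D ∘ₗ (LinearMap.id - P)) (w + p + J q) = ⁅J e, p⁆ := by
        simp only [LinearMap.comp_apply, LinearMap.sub_apply, LinearMap.id_apply, map_add, map_sub,
          hp0, hq0, hP1 w hw, hDx]
        simp [hJk e he q hq]
      rw [this]
      exact hk_ideal _ _ hp
    have t2 := LinearMap.trace_restrict_eq_of_forall_mem k _ hr2
    have t1 := LinearMap.trace_restrict_eq_of_forall_mem a _ hr1
    rw [hsplit, map_add, ← t1, ← t2] at h0
    have e2 : (D ∘ₗ (LinearMap.id - P)).restrict (fun x (_ : x ∈ k) => hr2 x)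
        = lam • LinearMap.id := by
      ext x
      have : P x = 0 := hP0 _ (hka x x.2)
      simp [this, hDx, hlam x x.2]
    set M := (D ∘ₗ P).restrict (fun x (_ : x ∈ a) => hr1 x) with hMdef
    have hMx : ∀ x : a, ((M x : a) : g) = ⁅J e, (x : g)⁆ := by
      intro x
      simp [hMdef, hDx, hP1 x x.2]
    have e1 := lckaux_skew (B.domRestrict₁₂ a a)
      (fun x hx => hBpos x (by simpa using hx))
      ((2 : ℝ) • M + θ (J e) • LinearMap.id) (by
        intro x y
        have h := hω (J e) (J x) (ha_n _ (haJ x x.2)) y (ha_n _ y.2)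
        rw [hcommJ e (hkn e he) x x.2, hJ2, hJ2] at h
        simp only [map_neg, LinearMap.neg_apply] at h
        simp only [LinearMap.domRestrict₁₂_apply, LinearMap.add_apply, LinearMap.smul_apply,
          Submodule.coe_add, Submodule.coe_smul, hMx, map_add, map_smul, LinearMap.id_apply,
          smul_eq_mul]
        linarith)
    rw [map_add, map_smul, map_smul, LinearMap.trace_id, ht] at e1
    rw [e2, map_smul, LinearMap.trace_id, hs] at h0
    simp only [smul_eq_mul] at e1 h0
    push_cast at e1
    linarith
  have hspos : (0 : ℝ) < s := by
    have : Nontrivial k := ⟨⟨e, he⟩, 0, fun h => hne' (congrArg Subtype.val h)⟩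
    rw [← hs]
    exact_mod_cast Module.finrank_pos
  have hlam0 : 0 ≤ lam := by
    have : 0 ≤ (s : ℝ) * lam := by rw [htr]; positivity
    exact nonneg_of_mul_nonneg_right this hspos
  -- k is isotropic
  have hiso : ∀ x ∈ k, ∀ y ∈ k, B (J x) y = 0 := by
    intro x hx y hy
    have h := hω (J e) x (hkn x hx) y (hkn y hy)
    rw [hlam x hx, hlam y hy] at h
    simp only [map_smul, LinearMap.smul_apply, smul_eq_mul] at h
    have h2 : (2 * lam + θ (J e)) * B (J x) y = 0 := by linarith
    exact (mul_eq_zero.mp h2).resolve_left (by positivity)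
  -- A = J e up to n
  obtain ⟨w, hw, p, hp, q, hq, hAdec⟩ := dec A
  have hqe : q = e := by
    have hm : q - e ∈ k := k.sub_mem hq he
    refine sub_eq_zero.mp (zero_of _ ?_)
    have h1 := hA (J (q - e))
    have h2 : B w (J (q - e)) = 0 := by
      rw [hBsymm, hJs, hka _ hm _ (haJ w hw), neg_zero]
    have h3 : B p (J (q - e)) = 0 := by rw [hBsymm, hiso _ hm p hp]
    rw [hAdec, map_add, map_add, LinearMap.add_apply, LinearMap.add_apply, h2, h3, hJB,
      ← heη _ hm] at h1
    rw [map_sub B, LinearMap.sub_apply]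
    linarith
  have hAA : B A A = θ (J e) := by
    rw [← hA A, hAdec, map_add, map_add, hθn w (ha_n w hw), hθn p (hkn p hp), hqe]
    simp
  refine ⟨lam, fun x hx => ?_, by rw [hAA, htr]⟩
  rw [hAdec, add_lie, add_lie, hnab w (ha_n w hw) x (hkn x hx), hnab p (hkn p hp) x (hkn x hx),
    hqe, hlam x hx]
  simp
end

section
/- Let g be a finite-dimensional real unimodular Lie algebra with a meta-abelian decomposition g = m ⊕ n and an LCK structure (J, ⟨·,·⟩, θ) such that θ ≠ 0, θ vanishes on n, n + J(n) = g, and a = n ∩ J(n) ≠ {0}. Let k be the orthogonal complement of a in n with respect to ⟨·,·⟩. Then the symmetric bilinear form κ on J(k) defined by κ(u₁, u₂) = trace of the linear operator k → k, x ↦ [u₁, [u₂, x]], is positive definite; in particular, for every nonzero u ∈ J(k) the trace of x ↦ [u, [u, x]] on k is strictly positive. -/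
theorem aux_spectral {V : Type*} [AddCommGroup V] [Module ℝ V] [FiniteDimensional ℝ V]
    (B : V →ₗ[ℝ] V →ₗ[ℝ] ℝ) (hs : ∀ x y, B x y = B y x) (hp : ∀ x, x ≠ 0 → 0 < B x x)
    (T : V →ₗ[ℝ] V) (hT : ∀ x y, B (T x) y = B x (T y)) :
    ∃ (N : ℕ) (b : Module.Basis (Fin N) ℝ V) (μ : Fin N → ℝ),
      (∀ i j, B (b i) (b j) = if i = j then 1 else 0) ∧ ∀ i, T (b i) = μ i • b i := by
  have hnn : ∀ x, 0 ≤ B x x := by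
    intro x
    by_cases h : x = 0
    · simp [h]
    · exact (hp x h).le
  let core : InnerProductSpace.Core ℝ V :=
    { inner := fun x y => B x y
      conj_inner_symm := fun x y => by simpa using hs y x
      re_inner_nonneg := fun x => by simpa using hnn x
      add_left := fun x y z => by simp
      smul_left := fun x y r => by simp
      definite := fun x h => by
        by_contra hx
        exact (hp x hx).ne' h }
  let i1 : NormedAddCommGroup V := core.toNormedAddCommGroup
  let i2 : InnerProductSpace ℝ V := InnerProductSpace.ofCore core.toCore
  have hTs : T.IsSymmetric := fun x y => hT x y
  let b := hTs.eigenvectorBasis rfl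
  refine ⟨_, b.toBasis, hTs.eigenvalues rfl, ?_, ?_⟩
  · intro i j
    have := orthonormal_iff_ite.mp b.orthonormal i j
    rw [OrthonormalBasis.coe_toBasis]
    exact this
  · intro i
    rw [OrthonormalBasis.coe_toBasis]
    exact hTs.apply_eigenvectorBasis rfl i

theorem aux_repr {V : Type*} [AddCommGroup V] [Module ℝ V]
    (B : V →ₗ[ℝ] V →ₗ[ℝ] ℝ) {N : ℕ} (b : Module.Basis (Fin N) ℝ V)
    (hb : ∀ i j, B (b i) (b j) = if i = j then 1 else 0) (x : V) (i : Fin N) :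
    b.repr x i = B (b i) x := by
  conv_rhs => rw [← b.sum_repr x]
  simp only [map_sum, map_smul, hb]
  simp

theorem aux_trace {V : Type*} [AddCommGroup V] [Module ℝ V]
    (B : V →ₗ[ℝ] V →ₗ[ℝ] ℝ) {N : ℕ} (b : Module.Basis (Fin N) ℝ V)
    (hb : ∀ i j, B (b i) (b j) = if i = j then 1 else 0) (T : V →ₗ[ℝ] V) :
    LinearMap.trace ℝ V T = ∑ i, B (b i) (T (b i)) := by
  rw [LinearMap.trace_eq_matrix_trace ℝ b, Matrix.trace]
  refine Finset.sum_congr rfl fun i _ => ?_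
  rw [Matrix.diag_apply, LinearMap.toMatrix_apply, aux_repr B b hb]

theorem aux_poly {V : Type*} [AddCommGroup V] [Module ℝ V] (T : V →ₗ[ℝ] V) (v : V) (μ : ℝ)
    (h : T v = μ • v) (p : Polynomial ℝ) :
    Polynomial.aeval T p v = p.eval μ • v := by
  induction p using Polynomial.induction_on' with
  | add p q hp hq => simp [hp, hq, add_smul]
  | monomial k a =>
    have : ∀ k : ℕ, (T ^ k) v = μ ^ k • v := by
      intro k
      induction k with
      | zero => simp
      | succ k ih => rw [pow_succ, Module.End.mul_apply, h, map_smul, ih, smul_smul, pow_succ, mul_comm]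
    simp [Polynomial.aeval_monomial, this, smul_smul, Module.algebraMap_end_apply, mul_comm]

theorem aux_algebra {V : Type*} [AddCommGroup V] [Module ℝ V] [FiniteDimensional ℝ V]
    (B : V →ₗ[ℝ] V →ₗ[ℝ] ℝ) (hs : ∀ x y, B x y = B y x) (hp : ∀ x, x ≠ 0 → 0 < B x x)
    (L : V →ₗ[ℝ] V →ₗ[ℝ] V) (lam : V →ₗ[ℝ] ℝ) (hlam : lam ≠ 0) (c : ℝ) (hc : 0 < c)
    (htr : ∀ v, LinearMap.trace ℝ V (L v) = c * lam v)
    (hcomm : ∀ v w, L v w = L w v)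
    (hassoc : ∀ v w, L (L v w) = L v ∘ₗ L w)
    (heq : ∀ u v w, B (L w v) u + lam w * B u v = B (L u v) w + lam u * B v w)
    (v : V) (hv : v ≠ 0) : 0 < LinearMap.trace ℝ V (L v ∘ₗ L v) := by
  have hnn : ∀ x, 0 ≤ B x x := by
    intro x
    by_cases h : x = 0
    · simp [h]
    · exact (hp x h).le
  obtain ⟨ξ, hξ⟩ : ∃ ξ, ∀ v, lam v = B ξ v := by
    obtain ⟨N, b, _, hb, _⟩ := aux_spectral B hs hp 0 (by simp)
    refine ⟨∑ i, lam (b i) • b i, fun v => ?_⟩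
    conv_lhs => rw [← b.sum_repr v]
    simp [aux_repr B b hb, mul_comm]
  have hξ0 : ξ ≠ 0 := by
    rintro rfl
    apply hlam
    ext v
    simp [hξ]
  have hpos := hp ξ hξ0
  have hkey : ∀ v w, lam (L w v) + lam w * lam v = B (L ξ v) w + B ξ ξ * B v w := by
    intro v w
    have := heq ξ v w
    rw [hs (L w v) ξ, ← hξ, ← hξ, hξ ξ] at this
    exact this
  have hsymm : ∀ x y, B (L ξ x) y = B x (L ξ y) := by
    intro x y
    have h1 := hkey x y
    have h2 := hkey y x
    rw [hcomm x y, hs y x] at h2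
    rw [hs x]
    linarith
  obtain ⟨N, b, μ, hb, hμ⟩ := aux_spectral B hs hp (L ξ) hsymm
  -- functional calculus
  have hLp : ∀ p : Polynomial ℝ, L (Polynomial.aeval (L ξ) p ξ) = Polynomial.aeval (L ξ) p ∘ₗ L ξ := by
    intro p
    induction p using Polynomial.induction_on' with
    | add p q hp hq => simp [hp, hq, LinearMap.add_comp]
    | monomial k a =>
      have : ∀ k : ℕ, L ((L ξ ^ k) ξ) = (L ξ ^ k) ∘ₗ L ξ := by
        intro k
        induction k with
        | zero => ext; simp
        | succ k ih =>
          rw [pow_succ', Module.End.mul_apply, hassoc, ih]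
          rfl
      ext x
      simp [Polynomial.aeval_monomial, this, Module.algebraMap_end_apply]
  have hadj : ∀ (p : Polynomial ℝ) (x y : V),
      B (Polynomial.aeval (L ξ) p x) y = B x (Polynomial.aeval (L ξ) p y) := by
    intro p
    induction p using Polynomial.induction_on' with
    | add p q hp hq => intro x y; simp [hp, hq]
    | monomial k a =>
      have : ∀ (k : ℕ) x y, B ((L ξ ^ k) x) y = B x ((L ξ ^ k) y) := by
        intro k
        induction k with
        | zero => simp
        | succ k ih =>
          intro x y
          rw [pow_succ, Module.End.mul_apply, ih, hsymm, ← Module.End.mul_apply, ← pow_succ', pow_succ]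
      intro x y
      simp [Polynomial.aeval_monomial, this, Module.algebraMap_end_apply]
  have hμnn : ∀ i, 0 ≤ μ i := by
    intro i
    by_contra hneg
    push Not at hneg
    let h : Polynomial ℝ := ∏ ν ∈ (Finset.univ.image μ).erase (μ i), (Polynomial.X - Polynomial.C ν)
    have h0 : ∀ j, μ j ≠ μ i → h.eval (μ j) = 0 := by
      intro j hj
      rw [Polynomial.eval_prod]
      refine Finset.prod_eq_zero (i := μ j) ?_ (by simp)
      simp [hj]
    have h1 : h.eval (μ i) ≠ 0 := by
      rw [Polynomial.eval_prod, Finset.prod_ne_zero_iff]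
      intro ν hν
      have := (Finset.mem_erase.mp hν).1
      simp only [Polynomial.eval_sub, Polynomial.eval_X, Polynomial.eval_C]
      exact sub_ne_zero.mpr this.symm
    have e1 := htr (Polynomial.aeval (L ξ) (h * h) ξ)
    rw [hLp, hξ, aux_trace B b hb, map_mul, Module.End.mul_apply, ← hadj] at e1
    have e2 := mul_nonneg hc.le (hnn (Polynomial.aeval (L ξ) h ξ))
    rw [← e1] at e2
    have e3 : ∀ j, B (b j) (((Polynomial.aeval (L ξ) h * Polynomial.aeval (L ξ) h) ∘ₗ L ξ) (b j))
        = μ j * (h.eval (μ j))^2 := by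
      intro j
      rw [LinearMap.comp_apply, hμ, Module.End.mul_apply, map_smul, map_smul,
        aux_poly _ _ _ (hμ j), map_smul, map_smul, aux_poly _ _ _ (hμ j)]
      simp only [map_smul, hb, smul_eq_mul, if_true]
      ring
    simp only [e3] at e2
    have e4 : ∑ j, μ j * (h.eval (μ j))^2 < 0 := by
      apply Finset.sum_neg'
      · intro j _
        by_cases hj : μ j = μ i
        · rw [hj]; exact mul_nonpos_of_nonpos_of_nonneg hneg.le (sq_nonneg _)
        · rw [h0 j hj]; simp
      · exact ⟨i, Finset.mem_univ _, mul_neg_of_neg_of_pos hneg (by positivity)⟩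
    linarith
  have hquad : ∀ x, B (L ξ x) x = ∑ i, μ i * (B (b i) x)^2 := by
    intro x
    rw [hsymm]
    conv_lhs => rw [← b.sum_repr x]
    simp only [map_sum, map_smul, LinearMap.sum_apply, LinearMap.smul_apply, hμ, hb, aux_repr B b hb]
    simp
    refine Finset.sum_congr rfl fun i _ => by ring
  have hLpos : ∀ x, 0 ≤ B (L ξ x) x := fun x => by
    rw [hquad]
    exact Finset.sum_nonneg fun i _ => mul_nonneg (hμnn i) (sq_nonneg _)
  rw [← hassoc, htr]
  apply mul_pos hc
  have hk := hkey v v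
  rw [hξ v] at hk
  -- Cauchy-Schwarz with remainder
  have hCS : B ξ ξ * B (B ξ ξ • v - B ξ v • ξ) (B ξ ξ • v - B ξ v • ξ)
      = B ξ ξ * B ξ ξ * (B ξ ξ * B v v - B ξ v ^ 2) := by
    simp [hs v ξ]
    ring
  by_cases hw : B ξ ξ • v - B ξ v • ξ = 0
  · have hvt : v = ((B ξ ξ)⁻¹ * B ξ v) • ξ := by
      rw [mul_smul, ← sub_eq_zero.mp hw, smul_smul, inv_mul_cancel₀ hpos.ne', one_smul]
    set t := (B ξ ξ)⁻¹ * B ξ v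
    have ht : t ≠ 0 := by
      rintro h
      rw [h, zero_smul] at hvt
      exact hv hvt
    have e : lam (L v v) = t^2 * lam (L ξ ξ) := by
      rw [hvt]; simp; ring
    rw [e]
    refine mul_pos (by positivity) ?_
    have e5 := hkey ξ ξ
    rw [hξ ξ] at e5
    have e6 : lam (L ξ ξ) = B (L ξ ξ) ξ := by linarith
    have e7 := htr (L ξ ξ)
    have e8 := hLpos ξ
    rw [hassoc, aux_trace B b hb] at e7
    have e9 : ∑ i, B (b i) ((L ξ ∘ₗ L ξ) (b i)) = ∑ i, μ i ^ 2 := by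
      refine Finset.sum_congr rfl fun i _ => ?_
      simp [hμ, hb]
      ring
    have e10 := htr ξ
    rw [aux_trace B b hb, hξ] at e10
    have e11 : ∑ i, B (b i) ((L ξ) (b i)) = ∑ i, μ i := by
      refine Finset.sum_congr rfl fun i _ => ?_
      simp [hμ, hb]
    rw [e11] at e10
    rw [e9] at e7
    have e12 : 0 < ∑ i, μ i ^ 2 := by
      by_contra hcon
      have hz : ∑ i, μ i ^ 2 = 0 :=
        le_antisymm (not_lt.mp hcon) (Finset.sum_nonneg fun i _ => sq_nonneg _)
      rw [Finset.sum_eq_zero_iff_of_nonneg (fun i _ => sq_nonneg _)] at hz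
      have : ∑ i, μ i = 0 := Finset.sum_eq_zero fun i hi => by simpa using hz i hi
      rw [this] at e10
      have := mul_pos hc hpos
      linarith
    rw [e7] at e12
    exact pos_of_mul_pos_right e12 hc.le
  · have h1 := hp _ hw
    have h2 := mul_pos hpos h1
    rw [hCS] at h2
    have h3 := pos_of_mul_pos_right h2 (mul_pos hpos hpos).le
    have h4 := hLpos v
    nlinarith

/-- decomposition of the trace -/
theorem aux_trace_split {g : Type*} [AddCommGroup g] [Module ℝ g] [FiniteDimensional ℝ g]
    (f P : g →ₗ[ℝ] g) (a k : Submodule ℝ g)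
    (hPa : ∀ x, P x ∈ a) (hPid : ∀ x ∈ a, P x = x) (hPk : ∀ x ∈ k, P x = 0)
    (hfa : ∀ x ∈ a, f x ∈ a) (hfk : ∀ x ∈ k, f x ∈ k) (hfP : ∀ x, f (x - P x) ∈ k) :
    LinearMap.trace ℝ g f = LinearMap.trace ℝ a (f.restrict hfa) +
      LinearMap.trace ℝ k (f.restrict hfk) := by
  have h : f = f ∘ₗ P + f ∘ₗ (LinearMap.id - P) := by ext x; simp
  have h1 : ∀ x, (f ∘ₗ P) x ∈ a := fun x => hfa _ (hPa x)
  have h2 : ∀ x, (f ∘ₗ (LinearMap.id - P)) x ∈ k := fun x => by simpa using hfP x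
  have e1 := LinearMap.trace_restrict_eq_of_forall_mem a (f ∘ₗ P) h1
  have e2 := LinearMap.trace_restrict_eq_of_forall_mem k (f ∘ₗ (LinearMap.id - P)) h2
  conv_lhs => rw [h, map_add, ← e1, ← e2]
  congr 2
  · ext ⟨x, hx⟩
    simp [hPid x hx]
  · ext ⟨x, hx⟩
    simp [hPk x hx]

theorem aux_trace_a {V : Type*} [AddCommGroup V] [Module ℝ V] [FiniteDimensional ℝ V]
    (B : V →ₗ[ℝ] V →ₗ[ℝ] ℝ) (hs : ∀ x y, B x y = B y x) (hp : ∀ x, x ≠ 0 → 0 < B x x)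
    (A : V →ₗ[ℝ] V) (t : ℝ) (h : ∀ x y, B (A x) y + B x (A y) = - t * B x y) :
    LinearMap.trace ℝ V A = - (Module.finrank ℝ V / 2 * t) := by
  obtain ⟨N, b, _, hb, _⟩ := aux_spectral B hs hp 0 (by simp)
  rw [aux_trace B b hb]
  have : ∀ i, B (b i) (A (b i)) = - t / 2 := by
    intro i
    have := h (b i) (b i)
    rw [hs (A _), hb] at this
    simp at this
    linarith
  simp only [this, Module.finrank_eq_card_basis b]
  simp
  ring

theorem aux_proj {g : Type*} [AddCommGroup g] [Module ℝ g] [FiniteDimensional ℝ g]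
    (B : g →ₗ[ℝ] g →ₗ[ℝ] ℝ) (hs : ∀ x y, B x y = B y x) (hp : ∀ x, x ≠ 0 → 0 < B x x)
    (a : Submodule ℝ g) :
    ∃ P : g →ₗ[ℝ] g, (∀ x, P x ∈ a) ∧ (∀ x, ∀ y ∈ a, B (x - P x) y = 0) := by
  obtain ⟨N, b, _, hb, _⟩ := aux_spectral (V := a) (B.compl₁₂ a.subtype a.subtype)
    (fun x y => hs _ _) (fun x hx => hp _ (by simpa using hx)) 0 (by simp)
  refine ⟨∑ i, (B (b i : g)).smulRight (b i : g), fun x => ?_, fun x y hy => ?_⟩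
  · simp only [LinearMap.sum_apply, LinearMap.smulRight_apply]
    exact Submodule.sum_mem _ fun i _ => a.smul_mem _ (b i).2
  · have hy' : y = ∑ i, B (b i : g) y • (b i : g) := by
      have := congrArg (fun z : a => (z : g)) (b.sum_repr ⟨y, hy⟩)
      simp only [aux_repr _ b hb] at this
      simpa using this.symm
    conv_lhs => rw [map_sub, LinearMap.sub_apply, hs x]
    simp only [LinearMap.sum_apply, LinearMap.smulRight_apply, map_sum, map_smul, LinearMap.smul_apply, smul_eq_mul]
    conv_lhs => lhs; rw [hy']
    simp [mul_comm]


/-- For a non-Vaisman LCK structure on a unimodular meta-abelian Lie algebra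
`g = m ⊕ n` with `n + J(n) = g` and `a = n ∩ J(n) ≠ 0`, the symmetric bilinear form
`κ(u₁,u₂) = tr(x ↦ ⁅u₁, ⁅u₂, x⁆⁆ : k → k)` on `J(k)` is positive definite: for every
nonzero `u ∈ J(k)` the trace of `x ↦ ⁅u, ⁅u, x⁆⁆` on `k` is strictly positive. -/
theorem lck_killing_positive_on_Jk
    (g : Type*) [LieRing g] [LieAlgebra ℝ g] [FiniteDimensional ℝ g]
    (B : g →ₗ[ℝ] g →ₗ[ℝ] ℝ) (J : g →ₗ[ℝ] g) (θ : g →ₗ[ℝ] ℝ)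
    (hBsymm : ∀ x y : g, B x y = B y x)
    (hBpos : ∀ x : g, x ≠ 0 → 0 < B x x)
    (hJ2 : ∀ x : g, J (J x) = -x)
    (hJB : ∀ x y : g, B (J x) (J y) = B x y)
    (hJint : ∀ x y : g, ⁅x, y⁆ - ⁅J x, J y⁆ + J ⁅x, J y⁆ + J ⁅J x, y⁆ = 0)
    (hθbr : ∀ x y : g, θ ⁅x, y⁆ = 0)
    (hLCK : ∀ x y z : g,
      -(B (J ⁅x, y⁆) z) - B (J ⁅y, z⁆) x - B (J ⁅z, x⁆) y =
        θ x * B (J y) z + θ y * B (J z) x + θ z * B (J x) y)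
    (m n : Submodule ℝ g)
    (hcompl : IsCompl m n)
    (hnab : ∀ x ∈ n, ∀ y ∈ n, ⁅x, y⁆ = (0 : g))
    (hnideal : ∀ x : g, ∀ y ∈ n, ⁅x, y⁆ ∈ n)
    (hmab : ∀ x ∈ m, ∀ y ∈ m, ⁅x, y⁆ = (0 : g))
    (hunimod : ∀ x : g, LinearMap.trace ℝ g (LieAlgebra.ad ℝ g x) = 0)
    (hθ0 : θ ≠ 0)
    (hθn : ∀ x ∈ n, θ x = 0)
    (hspan : n ⊔ Submodule.map J n = ⊤)
    (ha : n ⊓ Submodule.map J n ≠ ⊥)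
    (k : Submodule ℝ g)
    (hk : ∀ v : g, v ∈ k ↔ v ∈ n ∧ ∀ y ∈ n ⊓ Submodule.map J n, B v y = 0) :
    ∀ u ∈ Submodule.map J k, u ≠ 0 →
      ∀ (h : ∀ x ∈ k, ((LieAlgebra.ad ℝ g u) ∘ₗ (LieAlgebra.ad ℝ g u)) x ∈ k),
        0 < LinearMap.trace ℝ k
          (((LieAlgebra.ad ℝ g u) ∘ₗ (LieAlgebra.ad ℝ g u)).restrict h) := by
  set a := n ⊓ Submodule.map J n with ha_def
  have hJadj : ∀ x y, B (J x) y = - B x (J y) := by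
    intro x y
    rw [← hJB (J x) y, hJ2]; simp
  have hB0 : ∀ x, B x x = 0 → x = 0 := fun x hx => by
    by_contra h
    exact (hBpos x h).ne' hx
  have haJ : ∀ x ∈ a, J x ∈ a := by
    rintro x ⟨hx, y, hy, rfl⟩
    refine ⟨?_, Submodule.mem_map_of_mem hx⟩
    rw [hJ2]; exact n.neg_mem hy
  have han : ∀ x ∈ a, x ∈ n := fun x hx => hx.1
  have hkn : ∀ x ∈ k, x ∈ n := fun x hx => ((hk x).1 hx).1
  have hka : ∀ x ∈ k, ∀ y ∈ a, B x y = 0 := fun x hx => ((hk x).1 hx).2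
  have hgg : ∀ x y : g, ⁅x, y⁆ ∈ n := by
    intro x y
    obtain ⟨x1, hx1, x2, hx2, rfl⟩ := Submodule.mem_sup.1 (hcompl.sup_eq_top ▸ Submodule.mem_top : x ∈ m ⊔ n)
    obtain ⟨y1, hy1, y2, hy2, rfl⟩ := Submodule.mem_sup.1 (hcompl.sup_eq_top ▸ Submodule.mem_top : y ∈ m ⊔ n)
    rw [lie_add, add_lie, hmab x1 hx1 y1 hy1, zero_add]
    refine n.add_mem ?_ (hnideal _ _ hy2)
    rw [← lie_skew]
    exact n.neg_mem (hnideal _ _ hx2)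
  have F1 : ∀ v ∈ n, ∀ x ∈ a, ⁅J v, J x⁆ = J ⁅J v, x⁆ := by
    intro v hv x hx
    have := hJint v x
    rw [hnab v hv x hx.1, hnab v hv (J x) (haJ x hx).1] at this
    simp only [map_zero, zero_sub, add_zero] at this
    exact (eq_of_sub_eq_zero (by rw [← this]; abel)).symm
  have F1a : ∀ v ∈ n, ∀ x ∈ a, ⁅J v, x⁆ ∈ a := by
    intro v hv x hx
    refine ⟨hgg _ _, -⁅J v, J x⁆, n.neg_mem (hgg _ _), ?_⟩
    rw [F1 v hv x hx, map_neg, hJ2, neg_neg]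
  have F2 : ∀ x ∈ n, ∀ y ∈ n, ∀ z, B (J ⁅z, x⁆) y + B (J x) ⁅z, y⁆ = - θ z * B (J x) y := by
    intro x hx y hy z
    have h := hLCK x y z
    rw [hnab x hx y hy, hθn x hx, hθn y hy, ← lie_skew y z, map_neg, map_neg, LinearMap.neg_apply,
      hJadj ⁅z, y⁆ x, hBsymm ⁅z, y⁆] at h
    simp only [map_zero, LinearMap.zero_apply] at h
    linarith
  have F3 : ∀ v ∈ n, ∀ y ∈ k, ⁅J v, y⁆ ∈ k := by
    intro v hv y hy
    rw [hk]
    refine ⟨hgg _ _, fun x hx => ?_⟩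
    have h := F2 (J x) (haJ x hx).1 y (hkn y hy) (J v)
    rw [F1 v hv x hx, hJ2, hJ2, map_neg, map_neg, LinearMap.neg_apply, LinearMap.neg_apply,
      LinearMap.neg_apply,
      hBsymm _ y, hBsymm x y, hka y hy x hx, hka y hy _ (F1a v hv x hx)] at h
    rw [hBsymm]
    linarith
  have hkJn : ∀ x ∈ k, J x ∈ n → x = 0 := by
    intro x hx hJx
    apply hB0
    apply hka x hx
    refine ⟨hkn x hx, -J x, n.neg_mem hJx, ?_⟩
    rw [map_neg, hJ2, neg_neg]
  have F4 : ∀ v ∈ k, ∀ w ∈ k, ⁅J v, J w⁆ = 0 ∧ ⁅J v, w⁆ = ⁅J w, v⁆ := by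
    intro v hv w hw
    have h := hJint v w
    rw [hnab v (hkn v hv) w (hkn w hw)] at h
    have h1 : J (⁅J v, w⁆ - ⁅J w, v⁆) = ⁅J v, J w⁆ := by
      rw [map_sub, ← lie_skew (J w) v, map_neg]
      refine eq_of_sub_eq_zero ?_
      rw [← h]; abel
    have h2 : ⁅J v, w⁆ - ⁅J w, v⁆ = 0 := by
      apply hkJn
      · exact k.sub_mem (F3 v (hkn v hv) w hw) (F3 w (hkn w hw) v hv)
      · rw [h1]; exact hgg _ _
    rw [h2, map_zero] at h1
    exact ⟨h1.symm, sub_eq_zero.mp h2⟩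
  have F5 : ∀ u ∈ k, ∀ v ∈ k, ∀ w ∈ k, B ⁅J w, v⁆ u + θ (J w) * B u v
      = B ⁅J u, v⁆ w + θ (J u) * B v w := by
    intro u hu v hv w hw
    have h := hLCK v (J w) (J u)
    rw [(F4 w hw u hu).1, hθn v (hkn v hv), ← lie_skew v (J w), map_neg, map_neg, LinearMap.neg_apply,
      hJB, hJB, hJB, hJ2, map_neg, LinearMap.neg_apply] at h
    rw [hJB v w] at h
    simp only [map_zero, LinearMap.zero_apply] at h
    linarith
  -- the projection and the trace
  obtain ⟨P, hPa, hPo⟩ := aux_proj B hBsymm hBpos a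
  have hPid : ∀ x ∈ a, P x = x := by
    intro x hx
    have : x - P x ∈ a := a.sub_mem hx (hPa x)
    exact (sub_eq_zero.mp (hB0 _ (hPo x _ this))).symm
  have hPz : ∀ x, (∀ y ∈ a, B x y = 0) → P x = 0 := by
    intro x hx
    apply hB0
    have h1 := hPo x _ (hPa x)
    rw [map_sub, LinearMap.sub_apply, hx _ (hPa x)] at h1
    linarith
  have hPk : ∀ x ∈ k, P x = 0 := fun x hx => hPz x (hka x hx)
  have hPJk : ∀ x ∈ k, P (J x) = 0 := fun x hx => hPz _ fun y hy => by
    rw [hJadj, hka x hx _ (haJ y hy), neg_zero]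
  have hPn : ∀ x ∈ n, x - P x ∈ k := fun x hx => by
    rw [hk]
    exact ⟨n.sub_mem hx (hPa x).1, hPo x⟩
  have hdec : ∀ x : g, ∃ y ∈ n, ∃ z ∈ k, x = y + J z := by
    intro x
    obtain ⟨y, hy, _, ⟨w, hw, rfl⟩, rfl⟩ := Submodule.mem_sup.1 (hspan ▸ Submodule.mem_top : x ∈ n ⊔ Submodule.map J n)
    refine ⟨y + J (P w), n.add_mem hy (haJ _ (hPa w)).1, w - P w, hPn w hw, ?_⟩
    rw [map_sub]; abel
  have hfin : 0 < (Module.finrank ℝ a : ℝ) / 2 := by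
    have : 0 < Module.finrank ℝ a := by
      rw [Nat.pos_iff_ne_zero]
      intro h
      exact ha (Submodule.finrank_eq_zero.mp h)
    positivity
  let L : k →ₗ[ℝ] k →ₗ[ℝ] k := LinearMap.mk₂ ℝ
    (fun v w => ⟨⁅J v, (w : g)⁆, F3 v (hkn v v.2) w w.2⟩)
    (fun x y z => by ext; simp) (fun c x y => by ext; simp)
    (fun x y z => by ext; simp) (fun c x y => by ext; simp)
  have hL : ∀ v w : k, (L v w : g) = ⁅J v, (w : g)⁆ := fun v w => rfl
  rintro _ ⟨v, hv, rfl⟩ hv0 h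
  have hvne : (⟨v, hv⟩ : k) ≠ 0 := by
    intro h0
    have : v = 0 := congrArg Subtype.val h0
    apply hv0
    rw [this, map_zero]
  have main := aux_algebra (V := k) (B.compl₁₂ k.subtype k.subtype)
    (fun x y => hBsymm _ _) (fun x hx => hBpos _ (by simpa using hx)) L
    (θ ∘ₗ J ∘ₗ k.subtype) ?_ _ hfin ?_ ?_ ?_ ?_ ⟨v, hv⟩ hvne
  · have e : (((LieAlgebra.ad ℝ g (J v)) ∘ₗ (LieAlgebra.ad ℝ g (J v))).restrict h)
        = L ⟨v, hv⟩ ∘ₗ L ⟨v, hv⟩ := by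
      ext x
      simp [hL]
    rw [e]
    exact main
  · intro h0
    apply hθ0
    ext x
    obtain ⟨y, hy, z, hz, rfl⟩ := hdec x
    have := LinearMap.congr_fun h0 ⟨z, hz⟩
    simp at this
    simp [hθn y hy, this]
  · intro w
    have hw := hkn w w.2
    have e := aux_trace_split (LieAlgebra.ad ℝ g (J w)) P a k hPa hPid hPk
      (fun x hx => F1a w hw x hx) (fun x hx => F3 w hw x hx) (by
        intro x
        obtain ⟨y, hy, z, hz, rfl⟩ := hdec x
        have : y + J z - P (y + J z) = (y - P y) + J z := by
          rw [map_add, hPJk z hz]; abel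
        rw [this, map_add, LieAlgebra.ad_apply, LieAlgebra.ad_apply, (F4 w w.2 z hz).1, add_zero]
        exact F3 w hw _ (hPn y hy))
    rw [hunimod, aux_trace_a (V := a) (B.compl₁₂ a.subtype a.subtype)
      (fun x y => hBsymm _ _) (fun x hx => hBpos _ (by simpa using hx)) _ (θ (J w)) (by
        rintro ⟨x, hx⟩ ⟨y, hy⟩
        have h := F2 x hx.1 (J y) (haJ y hy).1 (J w)
        rw [F1 w hw y hy, hJB, hJB, hJB] at h
        exact h)] at e
    have e' : (LieAlgebra.ad ℝ g (J w)).restrict (fun x hx => F3 w hw x hx) = L w := by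
      ext x
      rfl
    rw [e'] at e
    simp only [LinearMap.comp_apply, Submodule.subtype_apply]
    linarith
  · intro x y
    ext
    rw [hL, hL, (F4 x x.2 y y.2).2]
  · intro x y
    ext z
    -- (xy)z = z(xy) = z (x y), x (y z) = x (z y) = z (x y)
    have c1 : ∀ p q : k, L p q = L q p := fun p q => by
      ext
      rw [hL, hL, (F4 p p.2 q q.2).2]
    have c2 : L x (L z y) = L z (L x y) := by
      ext
      rw [hL, hL, hL, hL]
      have := leibniz_lie (J x) (J z) (y : g)
      rw [(F4 x x.2 z z.2).1, zero_lie, zero_add] at this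
      exact this
    rw [LinearMap.comp_apply, c1 (L x y) z, c1 y z, c2]
  · intro u v w
    exact F5 u u.2 v v.2 w w.2
end
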